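/- arXiv:1811.00049 — 2 statements merged into one kernel-verified Lean document; each statement's English description precedes it below -/
import Mathlib

section
/- Let k | h with h/k odd, and let w be a divisor of (q+1)/2. Let SU^±(2,p^k) denote the group of 2×2 matrices over the field with p^{2k} elements of the form [[a, t·c^{p^k}], [c, t·a^{p^k}]] with a^{p^k+1} − c^{p^k+1} = 1 and t ∈ {1,−1} (a group of order 2·p^k·(p^{2k}−1), isomorphic to SL(2,p^k) ⋊ C₂). Let L̄ ≤ M_ℓ be a subgroup such that |L̄ ∩ Z₁| = w and L̄ is the internal direct product of L̄ ∩ Z₁ and a subgroup H isomorphic to SU^±(2,p^k). Then the number N of orbits of L̄ acting on O equals 1 + (q−p^k)/(p^k(p^k−1)(p^k+1)) + (q+1)·gcd(p^k+1, w)/((p^k+1)·w) + (q²−q−p^k(p^k−1))·(q+1)/(2·p^k(p^{2k}−1)·w). -/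
open Matrix

noncomputable def glAct {F : Type*} [Field F] (M : GL (Fin 3) F)
    (x : Projectivization F (Fin 3 → F)) : Projectivization F (Fin 3 → F) :=
  Projectivization.map
    ((LinearMap.GeneralLinearGroup.generalLinearEquiv F (Fin 3 → F)
        (Matrix.GeneralLinearGroup.toLin M)).toLinearMap)
    ((LinearMap.GeneralLinearGroup.generalLinearEquiv F (Fin 3 → F)
        (Matrix.GeneralLinearGroup.toLin M)).injective) x

noncomputable def numOrbits {F : Type*} [Field F] (L : Subgroup (GL (Fin 3) F))
    (O : Set (Projectivization F (Fin 3 → F))) : ℕ :=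
  Nat.card ((fun x => {y | ∃ g ∈ L, glAct g x = y}) '' O :
    Set (Set (Projectivization F (Fin 3 → F))))

def hermitianPts (q : ℕ) (F : Type*) [Field F] : Set (Projectivization F (Fin 3 → F)) :=
  {x | x.rep 1 ^ (q + 1) = x.rep 0 ^ (q + 1) - x.rep 2 ^ (q + 1)}

def MlSet (q : ℕ) (F : Type*) [Field F] : Set (GL (Fin 3) F) :=
  {M | ∃ a c τ : F, a ^ (q + 1) - c ^ (q + 1) = 1 ∧ τ ^ (q + 1) = 1 ∧
    (M : Matrix (Fin 3) (Fin 3) F) = !![a, τ * c ^ q, 0; c, τ * a ^ q, 0; 0, 0, 1]}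

def ZSet (q : ℕ) (F : Type*) [Field F] : Set (GL (Fin 3) F) :=
  {M | ∃ ε : F, ε ^ (q + 1) = 1 ∧ (M : Matrix (Fin 3) (Fin 3) F) = Matrix.diagonal ![ε, ε, 1]}

def Z1Set (q : ℕ) (F : Type*) [Field F] : Set (GL (Fin 3) F) :=
  {M | ∃ ε : F, ε ^ ((q + 1) / 2) = 1 ∧
    (M : Matrix (Fin 3) (Fin 3) F) = Matrix.diagonal ![ε, ε, 1]}

/-!
The group `L` is a product `H × S` with `S` the group of the `w` homologies `diag(ε, ε, 1)` in `L`,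
and Burnside's lemma counts its orbits. With `ρ h` the `2 × 2` block of `h ∈ H`, an element
`h * diag(ε, ε, 1)` fixes on the Hermitian curve the points `(1 : y : 0)` on isotropic lines
preserved by `ρ h` and the points `(v₀ : v₁ : 1)` for unit eigenvectors `v` of `ρ h` with eigenvalue
`ε⁻¹`. For nonscalar `ρ h` the first number, and for determinant `±1` also the sum of the second
over all `ε`, depends only on the order and the determinant of `ρ h`. The group `H` also acts on the
Hermitian plane over the field with `p ^ (2k)` elements, by all isometries of determinant `±1`;
an element has the same order in both representations, and the determinants have the same sign
whenever they matter. Hence the sums over `H` of these numbers are those of the small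
representation, up to a factor `(q + 1) / (p ^ k + 1)` for the eigenvectors and a correction at the
two scalar elements `±1`. The small sums follow from a double count, because there every isometry of
determinant `±1` occurs.
-/

/-! ### Finite fields of square order -/

section FiniteFields

open scoped Finset

lemma card_sub_one_of_card_eq_sq {F : Type*} [Fintype F] {n : ℕ} (hF : Fintype.card F = n ^ 2) :
    Fintype.card F - 1 = (n + 1) * (n - 1) := by
  simpa [hF] using Nat.sq_sub_sq n 1

variable {F : Type*} [Field F] [Fintype F]

lemma exists_isPrimitiveRoot_of_mul_eq {m d : ℕ} (hmd : m * d = Fintype.card F - 1) :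
    ∃ ζ : F, IsPrimitiveRoot ζ m := by
  obtain ⟨g, hg⟩ := IsCyclic.exists_generator (α := Fˣ)
  have hprim : IsPrimitiveRoot (g : F) (m * d) := by
    rw [IsPrimitiveRoot.coe_units_iff, hmd, ← Nat.card_eq_fintype_card, ← Nat.card_units,
      ← orderOf_eq_card_of_forall_mem_zpowers hg]
    exact IsPrimitiveRoot.orderOf g
  have hpos : 0 < m * d := hmd ▸ Nat.sub_pos_of_lt Fintype.one_lt_card
  exact ⟨(g : F) ^ d, hprim.pow hpos (mul_comm m d)⟩

lemma card_filter_pow_eq [DecidableEq F] {m d : ℕ} (hmd : m * d = Fintype.card F - 1) {s : F}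
    (hs : s ^ d = 1) : #{x : F | x ^ m = s} = m := by
  have hpos : 0 < m * d := hmd ▸ Nat.sub_pos_of_lt Fintype.one_lt_card
  have hm : 0 < m := Nat.pos_of_mul_pos_right hpos
  have hd : NeZero d := ⟨(Nat.pos_of_mul_pos_left hpos).ne'⟩
  have hs0 : s ≠ 0 := by
    rintro rfl
    simp [hd.out] at hs
  obtain ⟨ζ, hζ⟩ := exists_isPrimitiveRoot_of_mul_eq (m := m * d) (d := 1) (by rwa [mul_one])
  obtain ⟨i, -, hi⟩ := (hζ.pow hpos rfl).eq_pow_of_pow_eq_one hs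
  have hroot : (ζ ^ i) ^ m = s := by rw [← hi, ← pow_mul, ← pow_mul, mul_comm]
  have hζm := hζ.pow hpos (mul_comm m d)
  have hfilter : ({x : F | x ^ m = s} : Finset F) = (Polynomial.nthRoots m s).toFinset := by
    ext x
    simp [Polynomial.mem_nthRoots hm]
  rw [hfilter, Multiset.toFinset_card_of_nodup (hζm.nthRoots_nodup hs0),
    hζm.nthRoots_eq hroot, Multiset.card_map, Multiset.card_range]

variable {n : ℕ}

lemma add_pow_of_card_eq_sq (hF : Fintype.card F = n ^ 2) (x y : F) :
    (x + y) ^ n = x ^ n + y ^ n := by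
  obtain ⟨p, hp⟩ := CharP.exists F
  obtain ⟨m, hprime, hm⟩ := FiniteField.card F p
  have : Fact p.Prime := ⟨hprime⟩
  have hdvd : n ∣ p ^ (m : ℕ) := ⟨n, by rw [← hm, hF, sq]⟩
  obtain ⟨j, -, rfl⟩ := (Nat.dvd_prime_pow hprime).1 hdvd
  exact add_pow_char_pow x y p j

lemma one_lt_of_card_eq_sq (hF : Fintype.card F = n ^ 2) : 1 < n :=
  (Nat.one_lt_pow_iff two_ne_zero).1 (hF ▸ Fintype.one_lt_card)

lemma ringChar_ne_two_of_card_eq_sq (hF : Fintype.card F = n ^ 2) (hn : Odd n) :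
    ringChar F ≠ 2 := fun h2 ↦ by
  have heven := FiniteField.even_card_of_char_two h2
  have hodd : Odd (n ^ 2) := hn.pow
  rw [← hF, Nat.odd_iff] at hodd
  omega

lemma two_ne_zero_of_card_eq_sq (hF : Fintype.card F = n ^ 2) (hn : Odd n) : (2 : F) ≠ 0 :=
  Ring.two_ne_zero (ringChar_ne_two_of_card_eq_sq hF hn)

/-- The involutory automorphism `x ↦ x ^ n` of a field with `n ^ 2` elements, with respect to which
Hermitian forms over the field are formed. -/
def conj (hF : Fintype.card F = n ^ 2) : F →+* F where
  toFun x := x ^ n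
  map_one' := one_pow n
  map_mul' x y := mul_pow x y n
  map_zero' := zero_pow (one_lt_of_card_eq_sq hF).ne_bot
  map_add' := add_pow_of_card_eq_sq hF

lemma conj_apply (hF : Fintype.card F = n ^ 2) (x : F) : conj hF x = x ^ n := rfl

lemma conj_involutive (hF : Fintype.card F = n ^ 2) : Function.Involutive (conj hF) := fun x ↦ by
  rw [conj_apply, conj_apply, ← pow_mul, ← sq, ← hF, FiniteField.pow_card]

lemma mul_conj (hF : Fintype.card F = n ^ 2) (x : F) : x * conj hF x = x ^ (n + 1) := by
  rw [conj_apply, pow_succ']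

lemma pow_pred_mul_eq_conj (hF : Fintype.card F = n ^ 2) (x : F) : x ^ (n - 1) * x = conj hF x := by
  rw [conj_apply, ← pow_succ, Nat.sub_add_cancel (one_lt_of_card_eq_sq hF).le]

lemma card_filter_mul_conj_eq [DecidableEq F] (hF : Fintype.card F = n ^ 2) {s : F} (hs : s ≠ 0)
    (hs' : conj hF s = s) : #{x : F | x * conj hF x = s} = n + 1 := by
  simp_rw [mul_conj]
  refine card_filter_pow_eq (card_sub_one_of_card_eq_sq hF).symm (mul_right_cancel₀ hs ?_)
  rw [pow_pred_mul_eq_conj hF, hs', one_mul]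

lemma card_filter_conj_eq_mul [DecidableEq F] (hF : Fintype.card F = n ^ 2) {t : F}
    (ht : t * conj hF t = 1) : #{x : F | conj hF x = t * x} = n := by
  have hn := one_lt_of_card_eq_sq hF
  have hinsert : ({x : F | conj hF x = t * x} : Finset F) =
      insert 0 ({x : F | x ^ (n - 1) = t} : Finset F) := by
    ext x
    rcases eq_or_ne x 0 with rfl | hx
    · simp
    · simp [hx, ← pow_pred_mul_eq_conj hF x]
  have hzero : (0 : F) ∉ ({x : F | x ^ (n - 1) = t} : Finset F) := by
    rw [Finset.mem_filter_univ, zero_pow (by omega)]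
    rintro rfl
    simp at ht
  have hcard : #{x : F | x ^ (n - 1) = t} = n - 1 :=
    card_filter_pow_eq (d := n + 1) (by rw [mul_comm, card_sub_one_of_card_eq_sq hF])
      (by rw [← mul_conj hF, ht])
  rw [hinsert, Finset.card_insert_of_notMem hzero, hcard]
  omega

end FiniteFields

/-! ### Two-by-two matrices and their eigenvalues -/

section TwoByTwo

variable {F : Type*} [Field F] {M : Matrix (Fin 2) (Fin 2) F} {l m : F}

/-- Scalar matrices. They fix every line, so they are the exceptional case in all the counts of
eigenvectors. -/
def IsScalar (M : Matrix (Fin 2) (Fin 2) F) : Prop :=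
  ∃ c : F, M = c • 1

/-- The characteristic polynomial of the matrix is `(X - l) * (X - m)`; equivalently, `l` and `m`
are its two eigenvalues, counted with multiplicity. -/
structure HasEigenvalues (M : Matrix (Fin 2) (Fin 2) F) (l m : F) : Prop where
  trace_eq : M.trace = l + m
  det_eq : M.det = l * m

lemma isScalar_of_smul_eq {x y : F} (hx : x ≠ 0) (h : x • M = y • 1) : IsScalar M :=
  ⟨x⁻¹ * y, by rw [mul_smul, ← h, inv_smul_smul₀ hx]⟩

lemma pow_mulVec_of_mulVec_eq_smul {v : Fin 2 → F} (hv : M *ᵥ v = l • v) (k : ℕ) :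
    (M ^ k) *ᵥ v = l ^ k • v := by
  induction k with
  | zero => simp
  | succ k ih => rw [pow_succ, ← mulVec_mulVec, hv, mulVec_smul, ih, smul_smul, pow_succ']

lemma mul_eq_mul_of_same_eigenvalue (hM : ¬ IsScalar M) {v w : Fin 2 → F}
    (hv : M *ᵥ v = l • v) (hw : M *ᵥ w = l • w) : v 0 * w 1 = v 1 * w 0 := by
  by_contra hne
  apply hM
  have hv0 := congrFun hv 0
  have hv1 := congrFun hv 1
  have hw0 := congrFun hw 0
  have hw1 := congrFun hw 1
  simp only [mulVec, dotProduct, Fin.sum_univ_two, Pi.smul_apply, smul_eq_mul] at hv0 hv1 hw0 hw1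
  refine ⟨l, ?_⟩
  ext i j
  fin_cases i <;> fin_cases j <;> simp <;> grind

lemma exists_eq_smul_of_mul_eq_mul {v w : Fin 2 → F} (hv : v ≠ 0) (h : v 0 * w 1 = v 1 * w 0) :
    ∃ k : F, w = k • v := by
  by_cases hv0 : v 0 = 0
  · have hv1 : v 1 ≠ 0 := fun hv1 ↦ hv (by ext i; fin_cases i <;> simpa)
    refine ⟨w 1 / v 1, ?_⟩
    ext i
    fin_cases i <;> simp <;> grind
  · refine ⟨w 0 / v 0, ?_⟩
    ext i
    fin_cases i <;> simp <;> grind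

lemma exists_eq_smul_of_same_eigenvalue (hM : ¬ IsScalar M) {v w : Fin 2 → F} (hv0 : v ≠ 0)
    (hv : M *ᵥ v = l • v) (hw : M *ᵥ w = l • w) : ∃ k : F, w = k • v :=
  exists_eq_smul_of_mul_eq_mul hv0 (mul_eq_mul_of_same_eigenvalue hM hv hw)

/-- The commutant of a nonscalar matrix is the commutative algebra generated by it. -/
lemma commute_of_commute_of_not_isScalar {A B : Matrix (Fin 2) (Fin 2) F} (hM : ¬ IsScalar M)
    (hA : Commute M A) (hB : Commute M B) : Commute A B := by
  have hA' := fun i j ↦ congrFun (congrFun hA i) j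
  have hB' := fun i j ↦ congrFun (congrFun hB i) j
  have hM' : ¬ (M 0 1 = 0 ∧ M 1 0 = 0 ∧ M 0 0 = M 1 1) := fun ⟨h01, h10, h11⟩ ↦
    hM ⟨M 0 0, by ext i j; fin_cases i <;> fin_cases j <;> simp [h01, h10, h11]⟩
  have a00 := hA' 0 0
  have a01 := hA' 0 1
  have a10 := hA' 1 0
  have b00 := hB' 0 0
  have b01 := hB' 0 1
  have b10 := hB' 1 0
  simp only [mul_apply, Fin.sum_univ_two] at a00 a01 a10 b00 b01 b10
  ext i j
  fin_cases i <;> fin_cases j <;> simp [mul_apply, Fin.sum_univ_two] <;> grind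

lemma mul_self_eq_trace_smul_sub (A : Matrix (Fin 2) (Fin 2) F) :
    A * A = A.trace • A - A.det • 1 := by
  rw [trace_fin_two, det_fin_two]
  ext i j
  fin_cases i <;> fin_cases j <;> simp [mul_apply, Fin.sum_univ_two] <;> ring

lemma exists_hasEigenvalues_of_isSquare (h2 : (2 : F) ≠ 0)
    (h : IsSquare (M.trace ^ 2 - 4 * M.det)) : ∃ l m, HasEigenvalues M l m := by
  obtain ⟨s, hs⟩ := h
  refine ⟨(M.trace + s) / 2, (M.trace - s) / 2, by field_simp; ring, ?_⟩
  field_simp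
  linear_combination -hs

lemma mul_ne_mul_of_ne_eigenvalue (hlm : l ≠ m) {v w : Fin 2 → F} (hv0 : v ≠ 0) (hw0 : w ≠ 0)
    (hv : M *ᵥ v = l • v) (hw : M *ᵥ w = m • w) : v 0 * w 1 ≠ v 1 * w 0 := fun h ↦ by
  obtain ⟨k, rfl⟩ := exists_eq_smul_of_mul_eq_mul hv0 h
  rw [mulVec_smul, hv, smul_comm] at hw
  exact hlm (smul_left_injective F hw0 hw)

namespace HasEigenvalues

lemma symm (h : HasEigenvalues M l m) : HasEigenvalues M m l :=
  ⟨h.trace_eq.trans (add_comm l m), h.det_eq.trans (mul_comm l m)⟩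

lemma det_sub_smul_one (h : HasEigenvalues M l m) (z : F) :
    (M - z • (1 : Matrix (Fin 2) (Fin 2) F)).det = (z - l) * (z - m) := by
  have htrace := h.trace_eq
  have hdet := h.det_eq
  rw [trace_fin_two] at htrace
  rw [det_fin_two] at hdet
  simp only [det_fin_two, Matrix.sub_apply, Matrix.smul_apply, smul_eq_mul, one_apply_eq, ne_eq,
    zero_ne_one, one_ne_zero, not_false_eq_true, one_apply_ne]
  linear_combination hdet - z * htrace

lemma exists_mulVec_eq_smul (h : HasEigenvalues M l m) : ∃ v ≠ 0, M *ᵥ v = l • v := by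
  obtain ⟨v, hv0, hv⟩ := exists_mulVec_eq_zero_iff.2
    (show (M - l • (1 : Matrix (Fin 2) (Fin 2) F)).det = 0 by simp [h.det_sub_smul_one])
  rw [sub_mulVec, smul_mulVec, one_mulVec, sub_eq_zero] at hv
  exact ⟨v, hv0, hv⟩

lemma eq_or_eq_of_mulVec_eq_smul (h : HasEigenvalues M l m) {v : Fin 2 → F} (hv0 : v ≠ 0) {z : F}
    (hv : M *ᵥ v = z • v) : z = l ∨ z = m := by
  have hdet : (M - z • (1 : Matrix (Fin 2) (Fin 2) F)).det = 0 :=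
    exists_mulVec_eq_zero_iff.1 ⟨v, hv0, by rw [sub_mulVec, smul_mulVec, one_mulVec, hv, sub_self]⟩
  rw [h.det_sub_smul_one, mul_eq_zero, sub_eq_zero, sub_eq_zero] at hdet
  exact hdet

lemma mul_self_eq (h : HasEigenvalues M l m) : M * M = (l + m) • M - (l * m) • 1 := by
  rw [mul_self_eq_trace_smul_sub, h.trace_eq, h.det_eq]

lemma sub_smul_pow (h : HasEigenvalues M l m) (k : ℕ) :
    (l - m) • M ^ k = (l ^ k - m ^ k) • M - (l ^ k * m - m ^ k * l) • 1 := by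
  induction k with
  | zero => simp [← neg_smul]
  | succ k ih =>
    rw [pow_succ, ← smul_mul_assoc, ih, sub_mul, smul_mul_assoc, h.mul_self_eq, smul_mul_assoc,
      one_mul]
    module

lemma pow_succ_of_double (h : HasEigenvalues M l l) (k : ℕ) :
    M ^ (k + 1) = ((k + 1 : ℕ) * l ^ k) • M - (k * l ^ (k + 1)) • 1 := by
  induction k with
  | zero => simp
  | succ k ih =>
    rw [pow_succ, ih, sub_mul, smul_mul_assoc, h.mul_self_eq, smul_mul_assoc, one_mul]
    push_cast
    module

lemma pow_eq_one_left (h : HasEigenvalues M l m) {k : ℕ} (hk : M ^ k = 1) : l ^ k = 1 := by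
  obtain ⟨v, hv0, hv⟩ := h.exists_mulVec_eq_smul
  have hpow := pow_mulVec_of_mulVec_eq_smul hv k
  rw [hk, one_mulVec, eq_comm] at hpow
  exact smul_left_injective F hv0 (hpow.trans (one_smul F v).symm)

lemma pow_eq_one_iff (h : HasEigenvalues M l m) (hlm : l ≠ m) {k : ℕ} :
    M ^ k = 1 ↔ l ^ k = 1 ∧ m ^ k = 1 := by
  refine ⟨fun hk ↦ ⟨h.pow_eq_one_left hk, h.symm.pow_eq_one_left hk⟩, fun ⟨hl, hm⟩ ↦ ?_⟩
  have hpow := h.sub_smul_pow k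
  rw [hl, hm, sub_self, zero_smul, zero_sub, one_mul, one_mul, ← neg_smul, neg_sub] at hpow
  exact smul_right_injective _ (sub_ne_zero.2 hlm) hpow

lemma natCast_eq_zero_of_pow_eq_one (h : HasEigenvalues M l l) (hM : ¬ IsScalar M) (hl : l ≠ 0)
    {k : ℕ} (hk : M ^ k = 1) : (k : F) = 0 := by
  cases k with
  | zero => simp
  | succ k =>
    by_contra hne
    rw [h.pow_succ_of_double, sub_eq_iff_eq_add, ← one_smul F (1 : Matrix (Fin 2) (Fin 2) F),
      smul_smul, ← add_smul] at hk
    exact hM (isScalar_of_smul_eq (mul_ne_zero hne (pow_ne_zero _ hl)) hk)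

lemma eq_iff_dvd_orderOf [Finite F] {p : ℕ} [CharP F p] (h : HasEigenvalues M l m)
    (hM : ¬ IsScalar M) (hdet : M.det ≠ 0) : l = m ↔ p ∣ orderOf M := by
  have hl : l ≠ 0 := left_ne_zero_of_mul (h.det_eq ▸ hdet)
  have hm : m ≠ 0 := right_ne_zero_of_mul (h.det_eq ▸ hdet)
  constructor
  · rintro rfl
    rw [← CharP.cast_eq_zero_iff F p]
    exact h.natCast_eq_zero_of_pow_eq_one hM hl (pow_orderOf_eq_one M)
  · intro hdvd
    by_contra hlm
    have := Fintype.ofFinite F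
    have hpow : M ^ (Fintype.card F - 1) = 1 := (h.pow_eq_one_iff hlm).2
      ⟨FiniteField.pow_card_sub_one_eq_one l hl, FiniteField.pow_card_sub_one_eq_one m hm⟩
    have hzero := (CharP.cast_eq_zero_iff F p _).2 (hdvd.trans (orderOf_dvd_of_pow_eq_one hpow))
    rw [Nat.cast_sub Fintype.card_pos, Nat.cast_card_eq_zero] at hzero
    simp at hzero

end HasEigenvalues

end TwoByTwo

/-! ### Isometries of a Hermitian plane -/

section HermitianPlane

variable {F : Type*} [Field F] {σ : F →+* F} {M : Matrix (Fin 2) (Fin 2) F} {l m t : F}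
  {v w : Fin 2 → F}

/-- The value at `(v, w)` of the Hermitian form with matrix `diag(1, -1)`, with respect to the
involution `σ`. -/
def form (σ : F →+* F) (v w : Fin 2 → F) : F :=
  v 0 * σ (w 0) - v 1 * σ (w 1)

/-- Matrices preserving the Hermitian form `form σ`, that is, elements of the unitary group of this
form. -/
def IsIsometry (σ : F →+* F) (M : Matrix (Fin 2) (Fin 2) F) : Prop :=
  ∀ v w, form σ (M *ᵥ v) (M *ᵥ w) = form σ v w

/-- The matrix with first column `v` and determinant `t` of the shape that isometries have. It is
an isometry if `v` is a unit vector and `t` has norm `1`. -/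
def unitaryMat (σ : F →+* F) (v : Fin 2 → F) (t : F) : Matrix (Fin 2) (Fin 2) F :=
  !![v 0, t * σ (v 1); v 1, t * σ (v 0)]

lemma form_smul_smul (x y : F) : form σ (x • v) (y • w) = x * σ y * form σ v w := by
  simp only [form, Pi.smul_apply, smul_eq_mul, map_mul]
  ring

lemma map_form (hσ : Function.Involutive σ) : σ (form σ v w) = form σ w v := by
  simp only [form, map_sub, map_mul, hσ _]
  ring

lemma apply_zero_ne_zero_of_form_eq_zero (hv0 : v ≠ 0) (hvv : form σ v v = 0) : v 0 ≠ 0 :=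
  fun h ↦ by
    rw [form, h, zero_mul, zero_sub, neg_eq_zero, mul_eq_zero, map_eq_zero, or_self] at hvv
    exact hv0 (by ext i; fin_cases i <;> simpa)

lemma mul_eq_mul_of_form_eq_zero {u : Fin 2 → F} (hu : u ≠ 0) (hv : form σ v u = 0)
    (hw : form σ w u = 0) : v 0 * w 1 = v 1 * w 0 := by
  have hu' : ¬ (σ (u 0) = 0 ∧ σ (u 1) = 0) := fun ⟨h0, h1⟩ ↦ hu <| by
    ext i
    fin_cases i
    · exact (map_eq_zero σ).1 h0
    · exact (map_eq_zero σ).1 h1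
  rw [form] at hv hw
  grind

lemma mul_map_eq_one_or_form_eq_zero (hM : IsIsometry σ M) {x y : F} (hv : M *ᵥ v = x • v)
    (hw : M *ᵥ w = y • w) : x * σ y = 1 ∨ form σ v w = 0 := by
  rw [← mul_left_eq_self₀, ← form_smul_smul, ← hv, ← hw, hM]

lemma isIsometry_unitaryMat (hv : form σ v v = 1) (ht : t * σ t = 1) (hσ : Function.Involutive σ) :
    IsIsometry σ (unitaryMat σ v t) := fun x y ↦ by
  simp only [form] at hv
  simp only [form, unitaryMat, mulVec, dotProduct, Fin.sum_univ_two, of_apply, cons_val',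
    cons_val_zero, cons_val_one, cons_val_fin_one, map_add, map_mul, hσ _]
  linear_combination (x 0 * σ (y 0) - x 1 * σ (y 1)) * hv
    + (-x 1 * σ (y 1)) * hv * (t * σ t - 1) + (-x 1 * σ (y 1)) * ht

lemma det_unitaryMat (hv : form σ v v = 1) : (unitaryMat σ v t).det = t := by
  rw [form] at hv
  rw [unitaryMat, det_fin_two_of]
  linear_combination t * hv

lemma unitaryMat_mul_unitaryMat (hσ : Function.Involutive σ) (ht : t * σ t = 1) (s : F) :
    unitaryMat σ v t * unitaryMat σ w s = unitaryMat σ (unitaryMat σ v t *ᵥ w) (t * s) := by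
  simp only [unitaryMat, mul_fin_two, mulVec, dotProduct, Fin.sum_univ_two, of_apply, cons_val',
    cons_val_zero, cons_val_one, cons_val_fin_one, map_add, map_mul, hσ _]
  ext i j
  fin_cases i <;> fin_cases j <;> simp <;> grind

lemma unitaryMat_mulVec_single_zero : unitaryMat σ v t *ᵥ ![1, 0] = v := by
  ext i
  fin_cases i <;> simp [unitaryMat, mulVec, dotProduct]

namespace IsIsometry

lemma apply_one_eq (hM : IsIsometry σ M) :
    M 0 1 = M.det * σ (M 1 0) ∧ M 1 1 = M.det * σ (M 0 0) := by
  have h00 := hM ![1, 0] ![1, 0]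
  have h10 := hM ![0, 1] ![1, 0]
  simp only [form, mulVec, dotProduct, Fin.sum_univ_two, cons_val_zero, cons_val_one,
    cons_val_fin_one, map_one, map_zero, mul_one, mul_zero, add_zero, zero_add, sub_zero,
    sub_self] at h00 h10
  rw [det_fin_two]
  constructor
  · linear_combination (-M 0 1) * h00 + M 0 0 * h10
  · linear_combination (-M 1 1) * h00 + M 1 0 * h10

lemma det_mul_map_det (hM : IsIsometry σ M) :
    M.det * σ M.det = 1 := by
  have h11 := hM ![0, 1] ![0, 1]
  obtain ⟨h01, h11'⟩ := hM.apply_one_eq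
  simp only [form, mulVec, dotProduct, Fin.sum_univ_two, cons_val_zero, cons_val_one,
    cons_val_fin_one, map_one, map_zero, mul_one, mul_zero, zero_add, zero_sub] at h11
  nth_rw 2 [det_fin_two]
  rw [map_sub, map_mul, map_mul]
  linear_combination -h11 + σ (M 0 1) * h01 - σ (M 1 1) * h11'

lemma trace_eq_det_mul_map_trace (hM : IsIsometry σ M) (hσ : Function.Involutive σ) :
    M.trace = M.det * σ M.trace := by
  obtain ⟨-, h11⟩ := hM.apply_one_eq
  have hdet := hM.det_mul_map_det
  rw [trace_fin_two, map_add]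
  nth_rw 2 [h11]
  rw [map_mul, hσ]
  linear_combination h11 - M 0 0 * hdet

lemma form_self_eq_zero_of_double (hM : IsIsometry σ M) (hns : ¬ IsScalar M)
    (h : HasEigenvalues M l l) (hv0 : v ≠ 0) (hv : M *ᵥ v = l • v) : form σ v v = 0 := by
  by_contra hne
  have hnorm := (mul_map_eq_one_or_form_eq_zero hM hv hv).resolve_right hne
  have hw0 : ![σ (v 1), σ (v 0)] ≠ 0 := fun hw0 ↦ hne <| by
    have h1 : σ (v 1) = 0 := congrFun hw0 0
    have h0 : σ (v 0) = 0 := congrFun hw0 1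
    rw [form, h0, h1, mul_zero, mul_zero, sub_zero]
  have horth : form σ ![σ (v 1), σ (v 0)] v = 0 := by
    simp [form, mul_comm]
  have horth' : form σ (M *ᵥ ![σ (v 1), σ (v 0)]) v = 0 := by
    have hform := hM ![σ (v 1), σ (v 0)] v
    rw [hv, horth, ← one_smul F (M *ᵥ _), form_smul_smul, one_mul, mul_eq_zero] at hform
    exact hform.resolve_left (right_ne_zero_of_mul_eq_one hnorm)
  obtain ⟨x, hx⟩ :=
    exists_eq_smul_of_mul_eq_mul hw0 (mul_eq_mul_of_form_eq_zero hv0 horth horth')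
  obtain rfl : x = l := (h.eq_or_eq_of_mulVec_eq_smul hw0 hx).elim id id
  refine hne (sub_eq_zero.2 ?_)
  simpa using mul_eq_mul_of_same_eigenvalue hns hv hx

lemma form_eq_zero_of_ne (hM : IsIsometry σ M) (hlm : l ≠ m) (hl : l * σ l = 1)
    (hv : M *ᵥ v = l • v) (hw : M *ᵥ w = m • w) : form σ w v = 0 :=
  (mul_map_eq_one_or_form_eq_zero hM hw hv).resolve_left fun hml ↦
    hlm (mul_right_cancel₀ (right_ne_zero_of_mul_eq_one hl) (hl.trans hml.symm))

lemma form_self_ne_zero (hM : IsIsometry σ M) (h : HasEigenvalues M l m) (hlm : l ≠ m)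
    (hl : l * σ l = 1) (hv0 : v ≠ 0) (hv : M *ᵥ v = l • v) : form σ v v ≠ 0 := fun hvv ↦ by
  obtain ⟨w, hw0, hw⟩ := h.symm.exists_mulVec_eq_smul
  exact mul_ne_mul_of_ne_eigenvalue hlm hv0 hw0 hv hw
    (mul_eq_mul_of_form_eq_zero hv0 hvv (hM.form_eq_zero_of_ne hlm hl hv hw))

lemma norm_right_eq_one (hM : IsIsometry σ M) (h : HasEigenvalues M l m) (hl : l * σ l = 1) :
    m * σ m = 1 := by
  have hdet := hM.det_mul_map_det
  rw [h.det_eq, map_mul] at hdet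
  linear_combination hdet - m * σ m * hl

lemma eq_det_mul_map (hM : IsIsometry σ M) (hσ : Function.Involutive σ)
    (h : HasEigenvalues M l m) (hl : l * σ l ≠ 1) : l = M.det * σ l := by
  have hdet := hM.det_mul_map_det
  have htrace := hM.trace_eq_det_mul_map_trace hσ
  rw [h.trace_eq, map_add] at htrace
  rw [h.det_eq, map_mul] at hdet
  rw [h.det_eq] at htrace ⊢
  have hm : m ≠ 0 := by
    rintro rfl
    simp at hdet
  have hprod : m * ((l * σ l - 1) * (l * σ m - 1)) = 0 := by
    linear_combination l * hdet + htrace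
  have hlσm : l * σ m = 1 := by
    simpa [hm, sub_ne_zero.2 hl, sub_eq_zero] using hprod
  linear_combination -l * hdet + l * m * σ l * hlσm

end IsIsometry

end HermitianPlane

/-! ### Fixed isotropic lines and unit eigenvectors of an isometry -/

section Counts

open scoped Finset

variable {F : Type*} [Field F] {M : Matrix (Fin 2) (Fin 2) F} {l m z y : F} {v : Fin 2 → F}

section Slope

variable {σ : F →+* F}

lemma form_one_slope : form σ ![1, y] ![1, y] = 1 - y * σ y := by
  simp [form]

lemma isotropic_slope_iff (hns : ¬ IsScalar M) (hv0 : v ≠ 0) (hv : M *ᵥ v = l • v)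
    (hvv : form σ v v = 0) : y * σ y = 1 ∧ M *ᵥ ![1, y] = l • ![1, y] ↔ y = v 1 / v 0 := by
  have hv00 := apply_zero_ne_zero_of_form_eq_zero hv0 hvv
  constructor
  · rintro ⟨-, hy⟩
    rw [eq_div_iff hv00]
    simpa [mul_comm] using mul_eq_mul_of_same_eigenvalue hns hv hy
  · intro hy
    have hslope : ![1, y] = (v 0)⁻¹ • v := by
      ext i
      fin_cases i <;> simp [hv00, hy, div_eq_inv_mul]
    refine ⟨?_, by rw [hslope, mulVec_smul, hv, smul_comm]⟩
    have hform := form_one_slope (σ := σ) (y := y)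
    rw [hslope, form_smul_smul, hvv, mul_zero] at hform
    linear_combination hform

lemma not_isotropic_slope (hns : ¬ IsScalar M) (hv0 : v ≠ 0) (hv : M *ᵥ v = l • v)
    (hvv : form σ v v ≠ 0) : ¬ (y * σ y = 1 ∧ M *ᵥ ![1, y] = l • ![1, y]) := by
  rintro ⟨hy, hyM⟩
  obtain ⟨k, hk⟩ := exists_eq_smul_of_same_eigenvalue hns hv0 hv hyM
  have hform := form_one_slope (σ := σ) (y := y)
  rw [hy, sub_self, hk, form_smul_smul] at hform
  have hk0 : k = 0 := by simpa [hvv] using hform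
  simpa [hk0] using congrFun hk 0

end Slope

variable [Fintype F] {n : ℕ} {hF : Fintype.card F = n ^ 2}

lemma IsIsometry.exists_hasEigenvalues (hM : IsIsometry (conj hF) M) (hn : Odd n) :
    ∃ l m, HasEigenvalues M l m := by
  refine exists_hasEigenvalues_of_isSquare (two_ne_zero_of_card_eq_sq hF hn) ?_
  rcases eq_or_ne (M.trace ^ 2 - 4 * M.det) 0 with h0 | h0
  · exact h0 ▸ IsSquare.zero
  rw [FiniteField.isSquare_iff (ringChar_ne_two_of_card_eq_sq hF hn) h0]
  have hdet := hM.det_mul_map_det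
  have htrace := hM.trace_eq_det_mul_map_trace (conj_involutive hF)
  set D := M.trace ^ 2 - 4 * M.det with hD
  have hconj : M.det ^ 2 * conj hF D = 1 * D := by
    simp only [hD, map_sub, map_mul, map_pow, map_ofNat]
    linear_combination (-(M.trace + M.det * conj hF M.trace)) * htrace - 4 * M.det * hdet
  rw [← pow_pred_mul_eq_conj, ← mul_assoc] at hconj
  obtain ⟨j, rfl⟩ := hn
  have hpow := congrArg (· ^ (j + 1)) (mul_right_cancel₀ h0 hconj)
  have hexp : Fintype.card F / 2 = (2 * j + 1 - 1) * (j + 1) := by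
    rw [hF, Nat.add_sub_cancel, show (2 * j + 1) ^ 2 = 2 * (2 * j * (j + 1)) + 1 by ring]
    omega
  rw [hexp, pow_mul]
  simpa [mul_pow, ← pow_mul, show 2 * (j + 1) = 2 * j + 1 + 1 by ring, ← mul_conj hF, hdet]
    using hpow

lemma HasEigenvalues.ne_and_pow_eq_one_iff {p : ℕ} [CharP F p] (h : HasEigenvalues M l m)
    (hM : IsIsometry (conj hF) M) (hns : ¬ IsScalar M) (hp : ¬ p ∣ orderOf M) :
    l ≠ m ∧ (M ^ (n + 1) = 1 ↔ l * conj hF l = 1) := by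
  have hlm : l ≠ m :=
    mt (h.eq_iff_dvd_orderOf hns (left_ne_zero_of_mul_eq_one hM.det_mul_map_det)).1 hp
  refine ⟨hlm, ?_⟩
  rw [h.pow_eq_one_iff hlm, ← mul_conj hF, ← mul_conj hF, and_iff_left_iff_imp]
  exact hM.norm_right_eq_one h

lemma IsIsometry.pow_two_mul_sub_one_eq_one {p : ℕ} [CharP F p] (hM : IsIsometry (conj hF) M)
    (hn : Odd n) (hns : ¬ IsScalar M) (hdet : M.det = 1 ∨ M.det = -1) (hp : ¬ p ∣ orderOf M)
    (hpow : M ^ (n + 1) ≠ 1) : M ^ (2 * (n - 1)) = 1 := by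
  obtain ⟨l, m, h⟩ := hM.exists_hasEigenvalues hn
  obtain ⟨hlm, hiff⟩ := h.ne_and_pow_eq_one_iff hM hns hp
  have key {l m : F} (h : HasEigenvalues M l m) (hl : l * conj hF l ≠ 1) :
      l ^ (2 * (n - 1)) = 1 := by
    have hl0 : l ≠ 0 := left_ne_zero_of_mul
      (h.det_eq ▸ left_ne_zero_of_mul_eq_one hM.det_mul_map_det)
    have heq := hM.eq_det_mul_map (conj_involutive hF) h hl
    rw [← pow_pred_mul_eq_conj, ← mul_assoc, eq_comm, mul_eq_right₀ hl0] at heq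
    rw [mul_comm 2, pow_mul]
    rcases hdet with hdet | hdet <;> rw [hdet] at heq
    · linear_combination (l ^ (n - 1) + 1) * heq
    · linear_combination (1 - l ^ (n - 1)) * heq
  have hl := mt hiff.2 hpow
  exact (h.pow_eq_one_iff hlm).2 ⟨key h hl, key h.symm fun hm ↦ hl (hM.norm_right_eq_one h.symm hm)⟩

variable [DecidableEq F]

/-- The isotropic lines of the Hermitian plane fixed by `M`; the line spanned by `(1, y)` is
represented by its slope `y`. -/
def fixedIsotropic (σ : F →+* F) (M : Matrix (Fin 2) (Fin 2) F) : Finset F :=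
  {y | y * σ y = 1 ∧ ∃ z : F, M *ᵥ ![1, y] = z • ![1, y]}

/-- The eigenvectors of `M` with eigenvalue `z` which are unit vectors for the Hermitian form. -/
def unitEigenvectors (σ : F →+* F) (M : Matrix (Fin 2) (Fin 2) F) (z : F) : Finset (Fin 2 → F) :=
  {v | form σ v v = 1 ∧ M *ᵥ v = z • v}

section Eigenline

variable {σ : F →+* F}

lemma HasEigenvalues.mem_fixedIsotropic (h : HasEigenvalues M l m) :
    y ∈ fixedIsotropic σ M ↔ y * σ y = 1 ∧ M *ᵥ ![1, y] = l • ![1, y] ∨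
      y * σ y = 1 ∧ M *ᵥ ![1, y] = m • ![1, y] := by
  rw [fixedIsotropic, Finset.mem_filter_univ, ← and_or_left]
  refine and_congr_right fun _ ↦ ⟨fun ⟨z, hz⟩ ↦ ?_, fun hz ↦ hz.elim (⟨l, ·⟩) (⟨m, ·⟩)⟩
  rcases h.eq_or_eq_of_mulVec_eq_smul (by simp) hz with rfl | rfl
  · exact .inl hz
  · exact .inr hz

lemma unitEigenvectors_eq_empty_of_isotropic (hns : ¬ IsScalar M) (hv0 : v ≠ 0)
    (hv : M *ᵥ v = z • v) (hvv : form σ v v = 0) : unitEigenvectors σ M z = ∅ := by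
  refine Finset.filter_eq_empty_iff.2 fun u _ ⟨hu1, hu⟩ ↦ ?_
  obtain ⟨k, rfl⟩ := exists_eq_smul_of_same_eigenvalue hns hv0 hv hu
  simp [form_smul_smul, hvv] at hu1

lemma HasEigenvalues.unitEigenvectors_eq_empty (h : HasEigenvalues M l m) (hl : z ≠ l)
    (hm : z ≠ m) : unitEigenvectors σ M z = ∅ := by
  refine Finset.filter_eq_empty_iff.2 fun u _ ⟨hu1, hu⟩ ↦ ?_
  have hu0 : u ≠ 0 := by
    rintro rfl
    simp [form] at hu1
  exact (h.eq_or_eq_of_mulVec_eq_smul hu0 hu).elim hl hm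

end Eigenline

lemma card_unitEigenvectors_of_nonisotropic (hns : ¬ IsScalar M) (hv0 : v ≠ 0)
    (hv : M *ᵥ v = z • v) (hvv : form (conj hF) v v ≠ 0) :
    #(unitEigenvectors (conj hF) M z) = n + 1 := by
  have hreal : conj hF (form (conj hF) v v) = form (conj hF) v v := map_form (conj_involutive hF)
  rw [← card_filter_mul_conj_eq hF (inv_ne_zero hvv) (by rw [map_inv₀, hreal]), eq_comm]
  refine Finset.card_bij (fun k _ ↦ k • v) (fun k hk ↦ ?_)
    (fun k _ k' _ hkk' ↦ smul_left_injective F hv0 hkk') fun u hu ↦ ?_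
  · rw [Finset.mem_filter_univ] at hk
    rw [unitEigenvectors, Finset.mem_filter_univ, form_smul_smul, hk, inv_mul_cancel₀ hvv,
      mulVec_smul, hv, smul_comm]
    exact ⟨rfl, rfl⟩
  · rw [unitEigenvectors, Finset.mem_filter_univ] at hu
    obtain ⟨k, rfl⟩ := exists_eq_smul_of_same_eigenvalue hns hv0 hv hu.2
    rw [form_smul_smul] at hu
    exact ⟨k, by rw [Finset.mem_filter_univ]; exact eq_inv_of_mul_eq_one_left hu.1, rfl⟩

namespace IsIsometry

variable {p : ℕ} [CharP F p]

theorem card_fixedIsotropic (hM : IsIsometry (conj hF) M) (hn : Odd n) (hns : ¬ IsScalar M) :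
    #(fixedIsotropic (conj hF) M) =
      if p ∣ orderOf M then 1 else if M ^ (n + 1) = 1 then 0 else 2 := by
  obtain ⟨l, m, h⟩ := hM.exists_hasEigenvalues hn
  obtain ⟨v, hv0, hv⟩ := h.exists_mulVec_eq_smul
  obtain ⟨w, hw0, hw⟩ := h.symm.exists_mulVec_eq_smul
  split_ifs with hp hpow
  · obtain rfl := (h.eq_iff_dvd_orderOf hns (left_ne_zero_of_mul_eq_one hM.det_mul_map_det)).2 hp
    have hslope := fun y ↦ isotropic_slope_iff (σ := conj hF) (y := y) hns hv0 hv
      (hM.form_self_eq_zero_of_double hns h hv0 hv)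
    refine Finset.card_eq_one.2 ⟨v 1 / v 0, ?_⟩
    ext y
    rw [h.mem_fixedIsotropic, hslope, or_self, Finset.mem_singleton]
  · obtain ⟨hlm, hiff⟩ := h.ne_and_pow_eq_one_iff hM hns hp
    have hl := hiff.1 hpow
    rw [Finset.card_eq_zero, Finset.eq_empty_iff_forall_notMem]
    intro y
    rw [h.mem_fixedIsotropic, not_or]
    exact ⟨not_isotropic_slope hns hv0 hv (hM.form_self_ne_zero h hlm hl hv0 hv),
      not_isotropic_slope hns hw0 hw
        (hM.form_self_ne_zero h.symm hlm.symm (hM.norm_right_eq_one h hl) hw0 hw)⟩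
  · obtain ⟨hlm, hiff⟩ := h.ne_and_pow_eq_one_iff hM hns hp
    have hl := mt hiff.2 hpow
    have hm : ¬ m * conj hF m = 1 := fun hm ↦ hl (hM.norm_right_eq_one h.symm hm)
    have hslope_v := fun y ↦ isotropic_slope_iff (y := y) hns hv0 hv
      ((mul_map_eq_one_or_form_eq_zero hM hv hv).resolve_left hl)
    have hslope_w := fun y ↦ isotropic_slope_iff (y := y) hns hw0 hw
      ((mul_map_eq_one_or_form_eq_zero hM hw hw).resolve_left hm)
    refine Finset.card_eq_two.2 ⟨v 1 / v 0, w 1 / w 0, fun heq ↦ ?_, ?_⟩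
    · refine mul_ne_mul_of_ne_eigenvalue hlm (v := ![1, v 1 / v 0]) (w := ![1, v 1 / v 0])
        (by simp) (by simp) ((hslope_v _).2 rfl).2 ((hslope_w _).2 heq).2 (by simp)
    · ext y
      rw [h.mem_fixedIsotropic, hslope_v, hslope_w, Finset.mem_insert, Finset.mem_singleton]

theorem unitEigenvectors_eq_empty (hM : IsIsometry (conj hF) M) (hn : Odd n)
    (hns : ¬ IsScalar M) (hMp : p ∣ orderOf M ∨ M ^ (n + 1) ≠ 1) :
    unitEigenvectors (conj hF) M z = ∅ := by
  obtain ⟨l, m, h⟩ := hM.exists_hasEigenvalues hn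
  have hisotropic {l m : F} (h : HasEigenvalues M l m) {v : Fin 2 → F} (hv0 : v ≠ 0)
      (hv : M *ᵥ v = l • v) : form (conj hF) v v = 0 := by
    by_cases hp : p ∣ orderOf M
    · obtain rfl := (h.eq_iff_dvd_orderOf hns (left_ne_zero_of_mul_eq_one hM.det_mul_map_det)).2 hp
      exact hM.form_self_eq_zero_of_double hns h hv0 hv
    · exact (mul_map_eq_one_or_form_eq_zero hM hv hv).resolve_left
        (mt (h.ne_and_pow_eq_one_iff hM hns hp).2.2 (hMp.resolve_left hp))
  have hempty {l m : F} (h : HasEigenvalues M l m) : unitEigenvectors (conj hF) M l = ∅ := by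
    obtain ⟨v, hv0, hv⟩ := h.exists_mulVec_eq_smul
    exact unitEigenvectors_eq_empty_of_isotropic hns hv0 hv (hisotropic h hv0 hv)
  rcases eq_or_ne z l with rfl | hl
  · exact hempty h
  rcases eq_or_ne z m with rfl | hm
  · exact hempty h.symm
  exact h.unitEigenvectors_eq_empty hl hm

theorem card_unitEigenvectors (hM : IsIsometry (conj hF) M) (hns : ¬ IsScalar M)
    (h : HasEigenvalues M l m) (hlm : l ≠ m) (hl : l * conj hF l = 1) :
    #(unitEigenvectors (conj hF) M z) =
      (n + 1) * ((if z = l then 1 else 0) + if z = m then 1 else 0) := by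
  have hcard {l m : F} (h : HasEigenvalues M l m) (hlm : l ≠ m) (hl : l * conj hF l = 1) :
      #(unitEigenvectors (conj hF) M l) = n + 1 := by
    obtain ⟨v, hv0, hv⟩ := h.exists_mulVec_eq_smul
    exact card_unitEigenvectors_of_nonisotropic hns hv0 hv (hM.form_self_ne_zero h hlm hl hv0 hv)
  rcases eq_or_ne z l with rfl | hzl
  · simp [hlm, hcard h hlm hl]
  rcases eq_or_ne z m with rfl | hzm
  · simp [hzl, hcard h.symm hlm.symm (hM.norm_right_eq_one h hl)]
  simp [hzl, hzm, h.unitEigenvectors_eq_empty hzl hzm]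

/-- For eigenvalues `l`, `m` with `l * m = ±1`, the number of those which are `w`-th roots of unity
is determined by the order of the matrix, since `w` is odd. -/
theorem sum_card_unitEigenvectors (hM : IsIsometry (conj hF) M) (hn : Odd n)
    (hns : ¬ IsScalar M) (hdet : M.det = 1 ∨ M.det = -1) (hp : ¬ p ∣ orderOf M)
    (hpow : M ^ (n + 1) = 1) {w : ℕ} (hw : Odd w) :
    ∑ z : F with z ^ w = 1, #(unitEigenvectors (conj hF) M z) =
      (n + 1) * if M.det = 1 then if M ^ w = 1 then 2 else 0
        else if M ^ (2 * w) = 1 then 1 else 0 := by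
  obtain ⟨l, m, h⟩ := hM.exists_hasEigenvalues hn
  obtain ⟨hlm, hiff⟩ := h.ne_and_pow_eq_one_iff hM hns hp
  have hneg : (-1 : F) ≠ 1 :=
    Ring.neg_one_ne_one_of_char_ne_two (ringChar_ne_two_of_card_eq_sq hF hn)
  have hprod : l ^ w * m ^ w = M.det ^ w := by rw [h.det_eq, mul_pow]
  simp only [hM.card_unitEigenvectors hns h hlm (hiff.1 hpow), ← Finset.mul_sum,
    Finset.sum_add_distrib, Finset.sum_ite_eq', Finset.mem_filter_univ, h.pow_eq_one_iff hlm,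
    mul_comm 2 w, pow_mul l, pow_mul m]
  congr 1
  rcases hdet with hdet | hdet
  · rw [hdet, one_pow] at hprod
    have hiff' : l ^ w = 1 ↔ m ^ w = 1 :=
      ⟨fun h1 ↦ by rwa [h1, one_mul] at hprod, fun h1 ↦ by rwa [h1, mul_one] at hprod⟩
    by_cases h1 : m ^ w = 1 <;> simp [hdet, hiff', h1]
  · rw [hdet, hw.neg_one_pow] at hprod
    rw [hdet, if_neg hneg]
    by_cases h1 : l ^ w = 1
    · obtain h2 : m ^ w = -1 := by rwa [h1, one_mul] at hprod
      simp [h1, h2, hneg]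
    by_cases h2 : m ^ w = 1
    · obtain h3 : l ^ w = -1 := by rwa [h2, mul_one] at hprod
      simp [h2, h3, hneg]
    have h3 : (l ^ w) ^ 2 ≠ 1 := fun h3 ↦ h2 <| by
      rwa [(sq_eq_one_iff.1 h3).resolve_left h1, neg_mul, one_mul, neg_inj] at hprod
    simp [h1, h2, h3]

end IsIsometry

end Counts

/-! ### Counts over all isometries of a given determinant -/

section Cosets

open scoped Finset

variable {F : Type*} [Field F] {σ : F →+* F} {t y z : F} {v w : Fin 2 → F}

lemma unitaryMat_mulVec_left_injective (hσ : Function.Involutive σ) (ht : t * σ t = 1)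
    (hw : form σ w w = 1) : Function.Injective fun v ↦ unitaryMat σ v t *ᵥ w := fun v v' h ↦ by
  have hunit : IsUnit (unitaryMat σ w 1) := by
    rw [isUnit_iff_isUnit_det, det_unitaryMat hw]
    exact isUnit_one
  have hmul : unitaryMat σ v t * unitaryMat σ w 1 = unitaryMat σ v' t * unitaryMat σ w 1 := by
    rw [unitaryMat_mul_unitaryMat hσ ht, unitaryMat_mul_unitaryMat hσ ht]
    exact congrArg (unitaryMat σ · (t * 1)) h
  rw [← unitaryMat_mulVec_single_zero (σ := σ) (v := v) (t := t), hunit.mul_right_cancel hmul,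
    unitaryMat_mulVec_single_zero]

lemma unitaryMat_fixes_slope_iff (hσ : Function.Involutive σ) (ht : t * σ t = 1)
    (hy : y * σ y = 1) :
    (∃ z : F, unitaryMat σ v t *ᵥ ![1, y] = z • ![1, y]) ↔
      σ (v 0 - v 1 * σ y) = σ t * (v 0 - v 1 * σ y) := by
  have hmul : unitaryMat σ v t *ᵥ ![1, y] = ![v 0 + t * σ (v 1) * y, v 1 + t * σ (v 0) * y] := by
    ext i
    fin_cases i <;> simp [unitaryMat, mulVec, dotProduct]
  rw [hmul, map_sub, map_mul, hσ]
  constructor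
  · rintro ⟨z, hz⟩
    have h0 := congrFun hz 0
    have h1 := congrFun hz 1
    simp only [cons_val_zero, cons_val_one, cons_val_fin_one, Pi.smul_apply, smul_eq_mul] at h0 h1
    grind
  · intro h
    refine ⟨v 0 + t * σ (v 1) * y, ?_⟩
    ext i
    fin_cases i
    · simp
    · simp only [Fin.mk_one, cons_val_one, cons_val_fin_one, Pi.smul_apply, smul_eq_mul]
      grind

variable [Fintype F] [DecidableEq F]

lemma card_filter_fixes_slope_eq_mul (hσ : Function.Involutive σ) (h2 : (2 : F) ≠ 0)
    (ht : t * σ t = 1) (hy : y * σ y = 1) :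
    #{v : Fin 2 → F | form σ v v = 1 ∧ ∃ z : F, unitaryMat σ v t *ᵥ ![1, y] = z • ![1, y]} =
      #{x : F | σ x = -σ t * x} * #(({u : F | σ u = σ t * u} : Finset F).erase 0) := by
  simp_rw [unitaryMat_fixes_slope_iff hσ ht hy]
  rw [← Finset.card_product]
  refine Finset.card_bij'
    (fun v _ ↦ ((v 0 + v 1 * σ y - t / (v 0 - v 1 * σ y)) / 2, v 0 - v 1 * σ y))
    (fun a _ ↦ ![a.1 + (t / a.2 + a.2) / 2, (a.1 + (t / a.2 - a.2) / 2) * y])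
    (fun v hv ↦ ?_) (fun a ha ↦ ?_) (fun v hv ↦ ?_) (fun a ha ↦ ?_)
  · obtain ⟨hv, hu⟩ := (Finset.mem_filter_univ v).1 hv
    have hsum : (v 0 - v 1 * σ y) * (σ (v 0 + v 1 * σ y) + σ t * (v 0 + v 1 * σ y)) = 2 := by
      rw [map_sub, map_mul, hσ] at hu
      rw [form] at hv
      rw [map_add, map_mul, hσ]
      grind
    have hu0 := left_ne_zero_of_mul (hsum.trans_ne h2)
    have hσx : σ ((v 0 + v 1 * σ y - t / (v 0 - v 1 * σ y)) / 2) =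
        -σ t * ((v 0 + v 1 * σ y - t / (v 0 - v 1 * σ y)) / 2) := by
      rw [map_div₀, map_sub, map_div₀, hu, map_ofNat]
      grind
    simpa [hu0, hu] using hσx
  · obtain ⟨hx, hu0, hu⟩ : σ a.1 = -σ t * a.1 ∧ a.2 ≠ 0 ∧ σ a.2 = σ t * a.2 := by
      simpa using ha
    have hdiff : a.1 + (t / a.2 + a.2) / 2 - (a.1 + (t / a.2 - a.2) / 2) * y * σ y = a.2 := by
      grind
    rw [Finset.mem_filter_univ]
    refine ⟨?_, (congrArg σ hdiff).trans (hu.trans (congrArg (σ t * ·) hdiff.symm))⟩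
    simp only [form, cons_val_zero, cons_val_one, cons_val_fin_one, map_add, map_sub, map_mul,
      map_div₀, map_ofNat, hx, hu]
    grind
  · rw [Finset.mem_filter_univ, form] at hv
    ext i
    fin_cases i <;> simp <;> grind
  · have hu0 : a.2 ≠ 0 := by
      simp only [Finset.mem_product, Finset.mem_erase] at ha
      exact ha.2.1
    ext <;> simp <;> grind

variable {n : ℕ} {hF : Fintype.card F = n ^ 2}

lemma card_filter_mul_conj_eq_one_add (c : F) :
    #{a : F | a * conj hF a = 1 + c * conj hF c} = if c * conj hF c = -1 then 1 else n + 1 := by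
  split_ifs with hc
  · rw [hc, add_neg_cancel, Finset.card_eq_one]
    exact ⟨0, by ext a; simp⟩
  · refine card_filter_mul_conj_eq hF (fun h ↦ hc (by linear_combination h)) ?_
    rw [map_add, map_one, map_mul, conj_involutive hF c, mul_comm]

theorem card_unitSphere : #{v : Fin 2 → F | form (conj hF) v v = 1} = (n + 1) * (n * (n - 1)) := by
  have hfiber (c : F) : #{v : Fin 2 → F | form (conj hF) v v = 1 ∧ v 1 = c} =
      #{a : F | a * conj hF a = 1 + c * conj hF c} := by
    refine Finset.card_bij' (fun v _ ↦ v 0) (fun a _ ↦ ![a, c]) (fun v hv ↦ ?_) (fun a ha ↦ ?_)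
      (fun v hv ↦ ?_) fun a _ ↦ rfl
    · obtain ⟨hform, rfl⟩ := (Finset.mem_filter_univ v).1 hv
      exact (Finset.mem_filter_univ _).2 (sub_eq_iff_eq_add.1 hform)
    · rw [Finset.mem_filter_univ] at ha
      exact (Finset.mem_filter_univ _).2 ⟨sub_eq_iff_eq_add.2 ha, rfl⟩
    · obtain ⟨-, rfl⟩ := (Finset.mem_filter_univ v).1 hv
      ext i
      fin_cases i <;> rfl
  have hcount : #{c : F | c * conj hF c = -1} = n + 1 :=
    card_filter_mul_conj_eq hF (neg_ne_zero.2 one_ne_zero) (by simp)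
  have hcount' := Finset.card_filter_add_card_filter_not (s := (Finset.univ : Finset F))
    fun c ↦ c * conj hF c = -1
  rw [hcount, Finset.card_univ, hF] at hcount'
  rw [Finset.card_eq_sum_card_fiberwise (f := fun v ↦ v 1) (t := Finset.univ) (by simp)]
  simp_rw [Finset.filter_filter, hfiber, card_filter_mul_conj_eq_one_add, Finset.sum_ite,
    Finset.sum_const, hcount, smul_eq_mul, mul_one]
  obtain ⟨j, rfl⟩ := Nat.exists_eq_add_of_lt (one_lt_of_card_eq_sq hF)
  rw [Nat.add_sub_cancel]
  linear_combination (1 + j + 1 + 1) * hcount'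

theorem sum_card_unitEigenvectors_unitaryMat (ht : t * conj hF t = 1) :
    ∑ v with form (conj hF) v v = 1, #(unitEigenvectors (conj hF) (unitaryMat (conj hF) v t) z) =
      if z * conj hF z = 1 then (n + 1) * (n * (n - 1)) else 0 := by
  have hσ := conj_involutive hF
  let S : Finset (Fin 2 → F) := {v | form (conj hF) v v = 1}
  have hfiber (w : Fin 2 → F) (hw : w ∈ S) : #{v ∈ S | unitaryMat (conj hF) v t *ᵥ w = z • w} =
      if z * conj hF z = 1 then 1 else 0 := by
    have hw' := (Finset.mem_filter_univ w).1 hw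
    have hmem (v : Fin 2 → F) (hv : v ∈ S) : unitaryMat (conj hF) v t *ᵥ w ∈ S := by
      rw [Finset.mem_filter_univ] at hv ⊢
      rw [isIsometry_unitaryMat hv ht hσ, hw']
    have hform : form (conj hF) (z • w) (z • w) = z * conj hF z := by
      rw [form_smul_smul, hw', mul_one]
    split_ifs with hz
    · obtain ⟨v, hv, hvw⟩ := Finset.surjOn_of_injOn_of_card_le _ hmem
        (unitaryMat_mulVec_left_injective hσ ht hw').injOn le_rfl
        ((Finset.mem_filter_univ (z • w)).2 (hform.trans hz))
      refine Finset.card_eq_one.2 ⟨v, ?_⟩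
      ext v'
      rw [Finset.mem_filter, Finset.mem_singleton]
      refine ⟨fun h ↦ unitaryMat_mulVec_left_injective hσ ht hw' (h.2.trans hvw.symm), ?_⟩
      rintro rfl
      exact ⟨hv, hvw⟩
    · rw [Finset.card_eq_zero, Finset.filter_eq_empty_iff]
      intro v hv hvw
      have := hmem v hv
      rw [hvw, Finset.mem_filter_univ, hform] at this
      exact hz this
  calc ∑ v ∈ S, #(unitEigenvectors (conj hF) (unitaryMat (conj hF) v t) z)
      = ∑ v ∈ S, #{w ∈ S | unitaryMat (conj hF) v t *ᵥ w = z • w} := by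
        simp_rw [unitEigenvectors, S, Finset.filter_filter]
    _ = ∑ w ∈ S, #{v ∈ S | unitaryMat (conj hF) v t *ᵥ w = z • w} :=
        Finset.sum_card_bipartiteAbove_eq_sum_card_bipartiteBelow _
    _ = _ := by
        rw [Finset.sum_congr rfl hfiber, Finset.sum_const, card_unitSphere, smul_eq_mul, mul_ite,
          mul_one, mul_zero]

lemma card_filter_fixes_slope (hn : Odd n) (ht : t * conj hF t = 1) (hy : y * conj hF y = 1) :
    #{v : Fin 2 → F | form (conj hF) v v = 1 ∧
      ∃ z : F, unitaryMat (conj hF) v t *ᵥ ![1, y] = z • ![1, y]} = n * (n - 1) := by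
  have hσ := conj_involutive hF
  have ht' : conj hF t * conj hF (conj hF t) = 1 := by rw [hσ, mul_comm, ht]
  have hneg : -conj hF t * conj hF (-conj hF t) = 1 := by rw [map_neg, neg_mul_neg, ht']
  rw [card_filter_fixes_slope_eq_mul hσ (two_ne_zero_of_card_eq_sq hF hn) ht hy,
    card_filter_conj_eq_mul hF hneg, Finset.card_erase_of_mem (by simp),
    card_filter_conj_eq_mul hF ht']

theorem sum_card_fixedIsotropic_unitaryMat (hn : Odd n) (ht : t * conj hF t = 1) :
    ∑ v with form (conj hF) v v = 1, #(fixedIsotropic (conj hF) (unitaryMat (conj hF) v t)) =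
      (n + 1) * (n * (n - 1)) := by
  have hcard : #{y : F | y * conj hF y = 1} = n + 1 :=
    card_filter_mul_conj_eq hF one_ne_zero (map_one _)
  simp_rw [fixedIsotropic, ← Finset.filter_filter]
  refine (Finset.sum_card_bipartiteAbove_eq_sum_card_bipartiteBelow
    fun v y ↦ ∃ z : F, unitaryMat (conj hF) v t *ᵥ ![1, y] = z • ![1, y]).trans ?_
  rw [Finset.sum_congr rfl fun y hy ↦ ?_, Finset.sum_const, hcard, smul_eq_mul]
  rw [Finset.bipartiteBelow, Finset.filter_filter]
  exact card_filter_fixes_slope hn ht ((Finset.mem_filter_univ y).1 hy)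

end Cosets

/-! ### Two unitary representations of the same group -/

section UnitaryPairs

open scoped Finset

section Determinants

variable {F : Type*} [Field F] {A G : Matrix (Fin 2) (Fin 2) F} {t : F}

/-- The hypothesis says that `A` is conjugate to `t • A⁻¹`; compare traces. -/
lemma trace_eq_zero_or_det_eq_of_mul_mul_eq_smul (hG : IsUnit G) (h : A * G * A = t • G) :
    A.trace = 0 ∨ A.det = t := by
  have hconj : A.det • (A * G) = t • (G * A.adjugate) := by
    calc A.det • (A * G) = A * G * (A * A.adjugate) := by
          rw [mul_adjugate, mul_smul_comm, mul_one]
      _ = t • (G * A.adjugate) := by rw [← mul_assoc, h, smul_mul_assoc]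
  obtain ⟨U, rfl⟩ := hG
  have htrace := congrArg (fun B ↦ (B * (U⁻¹ : (Matrix (Fin 2) (Fin 2) F)ˣ).1).trace) hconj
  have hadj : A.adjugate.trace = A.trace := by
    rw [adjugate_fin_two, trace_fin_two_of, trace_fin_two, add_comm]
  simp only [smul_mul_assoc, trace_smul, mul_assoc, Units.mul_inv, mul_one, smul_eq_mul] at htrace
  rw [trace_mul_comm, mul_assoc, Units.inv_mul, mul_one, hadj] at htrace
  rcases mul_eq_mul_right_iff.1 htrace with hdet | htrace0
  exacts [.inr hdet, .inl htrace0]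

lemma isScalar_of_det_eq_one_of_sq_eq_one (h2 : (2 : F) ≠ 0) (hdet : A.det = 1)
    (hA : A ^ 2 = 1) : IsScalar A := by
  rw [sq, mul_self_eq_trace_smul_sub, hdet, one_smul, sub_eq_iff_eq_add, ← two_smul F] at hA
  refine isScalar_of_smul_eq (fun htrace ↦ h2 ?_) hA
  rw [htrace, zero_smul] at hA
  simpa using (congrFun (congrFun hA 0) 0).symm

end Determinants

/-- Faithful representations `ρ` and `φ` of a group `H` by isometries of Hermitian planes over the
fields `F` and `E` with `q ^ 2` and `r ^ 2` elements, where `q` is an odd power of `r`, such that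
the image of `φ` consists of all isometries with determinant `1` or `-1`. -/
structure UnitaryPair {F E H : Type*} [Field F] [Fintype F] [Field E] [Fintype E] [Group H]
    {q r : ℕ} (hF : Fintype.card F = q ^ 2) (hE : Fintype.card E = r ^ 2)
    (ρ : H →* Matrix (Fin 2) (Fin 2) F) (φ : H →* Matrix (Fin 2) (Fin 2) E) : Prop where
  mod_four : r % 4 = 1
  exists_odd_eq_pow : ∃ m, Odd m ∧ q = r ^ m
  injective_left : Function.Injective ρ
  injective_right : Function.Injective φ
  isIsometry_left : ∀ h, IsIsometry (conj hF) (ρ h)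
  mem_range_right_iff : ∀ M, M ∈ Set.range φ ↔
    ∃ v t, (t = 1 ∨ t = -1) ∧ form (conj hE) v v = 1 ∧ unitaryMat (conj hE) v t = M

namespace UnitaryPair

variable {F E H : Type*} [Field F] [Fintype F] [Field E] [Fintype E] [Group H] {q r : ℕ}
  {hF : Fintype.card F = q ^ 2} {hE : Fintype.card E = r ^ 2}
  {ρ : H →* Matrix (Fin 2) (Fin 2) F} {φ : H →* Matrix (Fin 2) (Fin 2) E} {h z : H} {l : E}
  {v : Fin 2 → E}

lemma odd_right (P : UnitaryPair hF hE ρ φ) : Odd r :=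
  Nat.odd_iff.2 (Nat.odd_of_mod_four_eq_one P.mod_four)

lemma odd_left (P : UnitaryPair hF hE ρ φ) : Odd q := by
  obtain ⟨m, -, rfl⟩ := P.exists_odd_eq_pow
  exact P.odd_right.pow

lemma left_mod_four (P : UnitaryPair hF hE ρ φ) : q % 4 = 1 := by
  obtain ⟨m, -, rfl⟩ := P.exists_odd_eq_pow
  rw [Nat.pow_mod, P.mod_four, one_pow, Nat.one_mod]

lemma sub_one_dvd (P : UnitaryPair hF hE ρ φ) : r - 1 ∣ q - 1 := by
  obtain ⟨m, -, rfl⟩ := P.exists_odd_eq_pow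
  simpa using Nat.sub_dvd_pow_sub_pow r 1 m

lemma add_one_dvd (P : UnitaryPair hF hE ρ φ) : r + 1 ∣ q + 1 := by
  obtain ⟨m, hm, rfl⟩ := P.exists_odd_eq_pow
  simpa using hm.nat_add_dvd_pow_add_pow r 1

lemma left_pow_eq_one_iff (P : UnitaryPair hF hE ρ φ) (k : ℕ) : ρ h ^ k = 1 ↔ h ^ k = 1 := by
  rw [← map_pow, map_eq_one_iff ρ P.injective_left]

lemma right_pow_eq_one_iff (P : UnitaryPair hF hE ρ φ) (k : ℕ) : φ h ^ k = 1 ↔ h ^ k = 1 := by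
  rw [← map_pow, map_eq_one_iff φ P.injective_right]

lemma det_right (P : UnitaryPair hF hE ρ φ) (h : H) : (φ h).det = 1 ∨ (φ h).det = -1 := by
  obtain ⟨v, t, ht, hv, hφ⟩ := (P.mem_range_right_iff _).1 ⟨h, rfl⟩
  rwa [← hφ, det_unitaryMat hv]

lemma isIsometry_right (P : UnitaryPair hF hE ρ φ) (h : H) : IsIsometry (conj hE) (φ h) := by
  obtain ⟨v, t, ht, hv, hφ⟩ := (P.mem_range_right_iff _).1 ⟨h, rfl⟩
  exact hφ ▸ isIsometry_unitaryMat hv (by rcases ht with rfl | rfl <;> simp) (conj_involutive hE)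

lemma exists_right_eq (P : UnitaryPair hF hE ρ φ) {t : E} (ht : t = 1 ∨ t = -1)
    (hv : form (conj hE) v v = 1) : ∃ h, φ h = unitaryMat (conj hE) v t :=
  (P.mem_range_right_iff _).2 ⟨v, t, ht, hv, rfl⟩

lemma sq_ne_neg_one (P : UnitaryPair hF hE ρ φ) (hl : l * conj hE l = 1) : l ^ 2 ≠ -1 := fun h ↦ by
  have hr : r + 1 = 2 * (2 * (r / 4) + 1) := by
    have := P.mod_four
    omega
  rw [mul_conj, hr, pow_mul, h, Odd.neg_one_pow ⟨_, rfl⟩] at hl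
  exact Ring.neg_one_ne_one_of_char_ne_two (ringChar_ne_two_of_card_eq_sq hE P.odd_right) hl

lemma exists_right_eq_antidiagonal (P : UnitaryPair hF hE ρ φ) :
    ∃ j : H, ∃ d : E, d ≠ 0 ∧ φ j = !![0, conj hE d; d, 0] := by
  classical
  have hcard : #{d : E | d * conj hE d = -1} = r + 1 :=
    card_filter_mul_conj_eq hE (neg_ne_zero.2 one_ne_zero) (by simp)
  obtain ⟨d, hd⟩ := Finset.card_pos.1 (r.succ_pos.trans_eq hcard.symm)
  rw [Finset.mem_filter_univ] at hd
  obtain ⟨j, hj⟩ := P.exists_right_eq (v := ![0, d]) (.inl rfl) (by simp [form, hd])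
  refine ⟨j, d, ?_, by simpa [unitaryMat] using hj⟩
  rintro rfl
  simp at hd

lemma exists_not_commute (P : UnitaryPair hF hE ρ φ) : ∃ s j : H, ¬ Commute s j := by
  obtain ⟨j, d, hd, hj⟩ := P.exists_right_eq_antidiagonal
  obtain ⟨s, hs⟩ := P.exists_right_eq (v := ![1, 0]) (.inr rfl) (by simp [form])
  refine ⟨s, j, fun hcomm ↦ ?_⟩
  have h10 := congrFun (congrFun (hcomm.map φ) 1) 0
  have h2d : 2 * d = 0 := by
    simp only [hs, hj, unitaryMat, mul_apply, Fin.sum_univ_two, of_apply, cons_val',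
      cons_val_zero, cons_val_one, cons_val_fin_one, map_zero, map_one, mul_zero, mul_one, one_mul,
      zero_add, add_zero, neg_mul] at h10
    linear_combination -h10
  exact mul_ne_zero (two_ne_zero_of_card_eq_sq hE P.odd_right) hd h2d

lemma isScalar_of_forall_commute (P : UnitaryPair hF hE ρ φ) {K : Type*} [Field K]
    {ψ : H →* Matrix (Fin 2) (Fin 2) K} (hψ : Function.Injective ψ) (hh : ∀ g, Commute h g) :
    IsScalar (ψ h) := by
  by_contra hns
  obtain ⟨s, j, hsj⟩ := P.exists_not_commute
  refine hsj (hψ ?_)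
  rw [map_mul, map_mul]
  exact commute_of_commute_of_not_isScalar hns ((hh s).map ψ) ((hh j).map ψ)

lemma right_eq_one_or_neg_one (P : UnitaryPair hF hE ρ φ) (hh : IsScalar (φ h)) :
    φ h = 1 ∨ φ h = -1 := by
  obtain ⟨c, hc⟩ := hh
  have hnorm : c * conj hE c = 1 := by
    simpa [hc, smul_mulVec, form] using P.isIsometry_right h ![1, 0] ![1, 0]
  have hdet := P.det_right h
  rw [hc, det_smul, det_one, mul_one, Fintype.card_fin] at hdet
  rw [hc]
  rcases sq_eq_one_iff.1 (hdet.resolve_right (P.sq_ne_neg_one hnorm)) with rfl | rfl <;> simp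

lemma exists_map_eq_neg_one (P : UnitaryPair hF hE ρ φ) : ∃ z : H, φ z = -1 ∧ ρ z = -1 := by
  obtain ⟨z, hz⟩ := P.exists_right_eq (v := ![-1, 0]) (.inl rfl) (by simp [form])
  have hφz : φ z = -1 := by
    rw [hz]
    ext i j
    fin_cases i <;> fin_cases j <;> simp [unitaryMat]
  obtain ⟨c, hc⟩ := P.isScalar_of_forall_commute P.injective_left (h := z) fun g ↦
    P.injective_right (by simp [hφz])
  have hz1 : z ≠ 1 := by
    rintro rfl
    have h00 := congrFun (congrFun (φ.map_one.symm.trans hφz) 0) 0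
    exact Ring.neg_one_ne_one_of_char_ne_two (ringChar_ne_two_of_card_eq_sq hE P.odd_right)
      (by simpa using h00.symm)
  have hz2 : z ^ 2 = 1 := (P.right_pow_eq_one_iff 2).1 (by rw [hφz, neg_one_sq])
  have hc2 : c ^ 2 = 1 := by
    rw [← P.left_pow_eq_one_iff, hc, smul_pow, one_pow] at hz2
    simpa using congrFun (congrFun hz2 0) 0
  refine ⟨z, hφz, ?_⟩
  rcases sq_eq_one_iff.1 hc2 with rfl | rfl
  · exact absurd (P.injective_left (by rw [hc, one_smul, map_one])) hz1
  · simpa using hc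

lemma isScalar_right_of_left (P : UnitaryPair hF hE ρ φ) (hh : IsScalar (ρ h)) :
    IsScalar (φ h) := by
  obtain ⟨c, hc⟩ := hh
  refine P.isScalar_of_forall_commute P.injective_right fun g ↦ P.injective_left ?_
  simp [hc]

/-- In an orthogonal basis starting with the eigenvector `v` the matrix of `φ h` is diagonal; take
for `g` an element exchanging the two basis lines. -/
lemma exists_right_mul_mul_eq (P : UnitaryPair hF hE ρ φ) (hv : form (conj hE) v v = 1)
    (hl : φ h *ᵥ v = l • v) : ∃ g, φ (h * g * h) = (φ h).det • φ g := by
  obtain ⟨u, hu⟩ := P.exists_right_eq (.inl rfl) hv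
  obtain ⟨j, d, -, hj⟩ := P.exists_right_eq_antidiagonal
  have huv : φ u⁻¹ *ᵥ v = ![1, 0] := by
    rw [← unitaryMat_mulVec_single_zero (σ := conj hE) (v := v) (t := 1), ← hu, mulVec_mulVec,
      ← map_mul, inv_mul_cancel, map_one, one_mulVec]
  obtain ⟨D, hD⟩ : ∃ D, D = φ (u⁻¹ * h * u) := ⟨_, rfl⟩
  have hDisom : IsIsometry (conj hE) D := hD ▸ P.isIsometry_right _
  have hdet : D.det = (φ h).det := by
    rw [hD, map_mul, map_mul, det_mul_right_comm, ← map_mul, inv_mul_cancel, map_one, one_mul]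
  have hcol : D *ᵥ ![1, 0] = l • ![1, 0] := by
    rw [hD, map_mul, map_mul, ← mulVec_mulVec, ← mulVec_mulVec, hu, unitaryMat_mulVec_single_zero,
      hl, mulVec_smul, huv]
  have hD10 : D 1 0 = 0 := by simpa [mulVec, dotProduct] using congrFun hcol 1
  have hD01 : D 0 1 = 0 := by
    rw [hDisom.apply_one_eq.1, hD10, map_zero, mul_zero]
  have hswap : D * φ j * D = D.det • φ j := by
    rw [det_fin_two, hD01, zero_mul, sub_zero, hj, eta_fin_two D, hD10, hD01]
    ext a b
    fin_cases a <;> fin_cases b <;> simp [mul_apply, Fin.sum_univ_two] <;> ring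
  refine ⟨u * j * u⁻¹, ?_⟩
  calc φ (h * (u * j * u⁻¹) * h) = φ u * (D * φ j * D) * φ u⁻¹ := by
        rw [hD, ← map_mul, ← map_mul, ← map_mul, ← map_mul]
        group
    _ = (φ h).det • φ (u * j * u⁻¹) := by
        rw [hswap, hdet, mul_smul_comm, smul_mul_assoc, map_mul, map_mul]

lemma mul_conj_eq_one (P : UnitaryPair hF hE ρ φ) (hv : form (conj hE) v v = 1)
    (hl : φ h *ᵥ v = l • v) : l * conj hE l = 1 := by
  have hform := P.isIsometry_right h v v
  rwa [hl, form_smul_smul, hv, mul_one] at hform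

/-- The relation found in `exists_right_mul_mul_eq`, transferred to `ρ`, determines `det (ρ h)`
unless `ρ h` has trace zero. -/
lemma exists_left_trace_eq_zero_or_det_eq (P : UnitaryPair hF hE ρ φ)
    (hv : form (conj hE) v v = 1) (hl : φ h *ᵥ v = l • v) :
    ∃ t : F, (t = 1 ∧ (φ h).det = 1 ∨ t = -1 ∧ (φ h).det = -1) ∧ (ρ h).det ^ 2 = 1 ∧
      ((ρ h).trace = 0 ∨ (ρ h).det = t) := by
  obtain ⟨z, hφz, hρz⟩ := P.exists_map_eq_neg_one
  obtain ⟨g, hg⟩ := P.exists_right_mul_mul_eq hv hl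
  obtain ⟨t, ht, hρ⟩ : ∃ t : F, (t = 1 ∧ (φ h).det = 1 ∨ t = -1 ∧ (φ h).det = -1) ∧
      ρ h * ρ g * ρ h = t • ρ g := by
    rcases P.det_right h with hdet | hdet
    · refine ⟨1, .inl ⟨rfl, hdet⟩, ?_⟩
      rw [hdet, one_smul] at hg
      rw [← map_mul, ← map_mul, P.injective_right hg, one_smul]
    · refine ⟨-1, .inr ⟨rfl, hdet⟩, ?_⟩
      rw [hdet, neg_one_smul, ← neg_one_mul, ← hφz, ← map_mul] at hg
      rw [← map_mul, ← map_mul, P.injective_right hg, map_mul, hρz, neg_one_mul, neg_one_smul]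
  have hunit : IsUnit (ρ g) := (Group.isUnit g).map ρ
  refine ⟨t, ht, ?_, trace_eq_zero_or_det_eq_of_mul_mul_eq_smul hunit hρ⟩
  have hdet := congrArg det hρ
  rw [det_mul, det_mul, det_smul, Fintype.card_fin] at hdet
  have ht2 : t ^ 2 = 1 := by rcases ht with ⟨rfl, -⟩ | ⟨rfl, -⟩ <;> simp
  exact mul_right_cancel₀ ((isUnit_iff_isUnit_det _).1 hunit).ne_zero
    (by linear_combination hdet + (ρ g).det * ht2)

theorem det_eq_one_or_det_eq_neg_one_of_mulVec_eq_smul (P : UnitaryPair hF hE ρ φ)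
    (hns : ¬ IsScalar (φ h)) (hv : form (conj hE) v v = 1) (hl : φ h *ᵥ v = l • v) :
    (φ h).det = 1 ∧ (ρ h).det = 1 ∨ (φ h).det = -1 ∧ (ρ h).det = -1 := by
  obtain ⟨z, hφz, hρz⟩ := P.exists_map_eq_neg_one
  obtain ⟨t, ht, hdet2, htrace | rfl⟩ := P.exists_left_trace_eq_zero_or_det_eq hv hl
  · have hsq : ρ (h ^ 2) = -((ρ h).det • 1) := by
      rw [map_pow, sq, mul_self_eq_trace_smul_sub, htrace, zero_smul, zero_sub]
    rcases sq_eq_one_iff.1 hdet2 with hdet | hdet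
    · rw [hdet, one_smul, ← hρz] at hsq
      have hl2 := pow_mulVec_of_mulVec_eq_smul hl 2
      have hv0 : v ≠ 0 := by
        rintro rfl
        simp [form] at hv
      rw [← map_pow, P.injective_left hsq, hφz, neg_mulVec, one_mulVec, ← neg_one_smul E v] at hl2
      exact absurd (smul_left_injective E hv0 hl2).symm (P.sq_ne_neg_one (P.mul_conj_eq_one hv hl))
    · rw [hdet, neg_one_smul, neg_neg, map_pow, P.left_pow_eq_one_iff,
        ← P.right_pow_eq_one_iff] at hsq
      refine .inr ⟨(P.det_right h).resolve_left fun hdet1 ↦ hns ?_, hdet⟩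
      exact isScalar_of_det_eq_one_of_sq_eq_one (two_ne_zero_of_card_eq_sq hE P.odd_right) hdet1 hsq
  · exact ht.imp And.symm And.symm

lemma pow_add_one_eq_one_iff {p : ℕ} [CharP E p] (P : UnitaryPair hF hE ρ φ)
    (hns : ¬ IsScalar (φ h)) (hp : ¬ p ∣ orderOf h) : h ^ (q + 1) = 1 ↔ h ^ (r + 1) = 1 := by
  simp only [← orderOf_dvd_iff_pow_eq_one]
  refine ⟨fun hq ↦ ?_, fun hr ↦ hr.trans P.add_one_dvd⟩
  by_contra hr
  have hr2 : h ^ (2 * (r - 1)) = 1 := (P.right_pow_eq_one_iff _).1 <|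
    (P.isIsometry_right h).pow_two_mul_sub_one_eq_one P.odd_right hns (P.det_right h)
      (by rwa [orderOf_injective φ P.injective_right])
      (by rwa [ne_eq, P.right_pow_eq_one_iff, ← orderOf_dvd_iff_pow_eq_one])
  have hq2 : orderOf h ∣ 2 * (q - 1) :=
    (orderOf_dvd_of_pow_eq_one hr2).trans (Nat.mul_dvd_mul_left 2 P.sub_one_dvd)
  have hq4 := P.left_mod_four
  have hr4 := P.mod_four
  have hdvd4 : orderOf h ∣ 4 := by
    have hsub := Nat.dvd_sub (hq.mul_left 2) hq2
    rwa [show 2 * (q + 1) - 2 * (q - 1) = 4 by omega] at hsub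
  have hdvd2 : orderOf h ∣ 2 := by
    rw [show q + 1 = 4 * (q / 4) + 2 by omega] at hq
    exact (Nat.dvd_add_right (hdvd4.mul_right _)).1 hq
  exact hr (hdvd2.trans (by omega))

theorem card_fixedIsotropic_left_eq [DecidableEq F] [DecidableEq E] (p : ℕ) [CharP F p]
    [CharP E p] (P : UnitaryPair hF hE ρ φ) (hns : ¬ IsScalar (φ h)) :
    #(fixedIsotropic (conj hF) (ρ h)) = #(fixedIsotropic (conj hE) (φ h)) := by
  rw [(P.isIsometry_left h).card_fixedIsotropic (p := p) P.odd_left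
      (mt P.isScalar_right_of_left hns),
    (P.isIsometry_right h).card_fixedIsotropic (p := p) P.odd_right hns,
    orderOf_injective ρ P.injective_left, orderOf_injective φ P.injective_right]
  by_cases hp : p ∣ orderOf h
  · rw [if_pos hp, if_pos hp]
  · have hpow : ρ h ^ (q + 1) = 1 ↔ φ h ^ (r + 1) = 1 := by
      rw [P.left_pow_eq_one_iff, P.right_pow_eq_one_iff, P.pow_add_one_eq_one_iff hns hp]
    rw [if_neg hp, if_neg hp, if_congr hpow rfl rfl]

lemma det_eq_one_or_det_eq_neg_one {p : ℕ} [CharP E p] (P : UnitaryPair hF hE ρ φ)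
    (hns : ¬ IsScalar (φ h)) (hp : ¬ p ∣ orderOf h) (hr : h ^ (r + 1) = 1) :
    (φ h).det = 1 ∧ (ρ h).det = 1 ∨ (φ h).det = -1 ∧ (ρ h).det = -1 := by
  classical
  obtain ⟨l, m, hlm⟩ := (P.isIsometry_right h).exists_hasEigenvalues P.odd_right
  obtain ⟨hne, hiff⟩ := hlm.ne_and_pow_eq_one_iff (p := p) (P.isIsometry_right h) hns
    (by rwa [orderOf_injective φ P.injective_right])
  have hl := hiff.1 ((P.right_pow_eq_one_iff _).2 hr)
  obtain ⟨u, hu0, hu⟩ := hlm.exists_mulVec_eq_smul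
  have hcard := card_unitEigenvectors_of_nonisotropic hns hu0 hu
    ((P.isIsometry_right h).form_self_ne_zero hlm hne hl hu0 hu)
  obtain ⟨v, hv⟩ := Finset.card_pos.1 (r.succ_pos.trans_eq hcard.symm)
  obtain ⟨hv1, hv⟩ := (Finset.mem_filter_univ v).1 hv
  exact P.det_eq_one_or_det_eq_neg_one_of_mulVec_eq_smul hns hv1 hv

lemma pow_gcd_add_one_eq_one_iff (P : UnitaryPair hF hE ρ φ) (hr : h ^ (r + 1) = 1) {w : ℕ}
    (hw : Odd w) : (h ^ (r + 1).gcd w = 1 ↔ h ^ w = 1) ∧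
      (h ^ (2 * (r + 1).gcd w) = 1 ↔ h ^ (2 * w) = 1) := by
  obtain ⟨s, hs⟩ : 2 ∣ r + 1 := P.odd_right.add_one.two_dvd
  have hgcd : 2 * (r + 1).gcd w = (r + 1).gcd (2 * w) := by
    rw [hs, Nat.gcd_mul_left, Nat.Coprime.gcd_mul_left_cancel _ (Nat.coprime_two_left.2 hw)]
  rw [hgcd, pow_gcd_eq_one, pow_gcd_eq_one, and_iff_right hr, and_iff_right hr]
  exact ⟨.rfl, .rfl⟩

theorem sum_card_unitEigenvectors_left_eq [DecidableEq F] [DecidableEq E] (p : ℕ) [CharP F p]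
    [CharP E p] (P : UnitaryPair hF hE ρ φ) (hns : ¬ IsScalar (φ h)) {w : ℕ} (hw : Odd w) :
    (r + 1) * ∑ x : F with x ^ w = 1, #(unitEigenvectors (conj hF) (ρ h) x) =
      (q + 1) * ∑ x : E with x ^ (r + 1).gcd w = 1, #(unitEigenvectors (conj hE) (φ h) x) := by
  have hρns := mt P.isScalar_right_of_left hns
  have hρord := orderOf_injective ρ P.injective_left h
  have hφord := orderOf_injective φ P.injective_right h
  by_cases hzero : p ∣ orderOf h ∨ h ^ (r + 1) ≠ 1
  · have hρzero : p ∣ orderOf (ρ h) ∨ ρ h ^ (q + 1) ≠ 1 := by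
      rw [hρord, ne_eq, P.left_pow_eq_one_iff]
      by_cases hp : p ∣ orderOf h
      exacts [.inl hp, .inr (mt (P.pow_add_one_eq_one_iff hns hp).1 (hzero.resolve_left hp))]
    rw [← hφord, ne_eq, ← P.right_pow_eq_one_iff] at hzero
    simp [(P.isIsometry_left h).unitEigenvectors_eq_empty P.odd_left hρns hρzero,
      (P.isIsometry_right h).unitEigenvectors_eq_empty P.odd_right hns hzero]
  obtain ⟨hp, hr⟩ := not_or.1 hzero
  rw [not_not] at hr
  have hdet := P.det_eq_one_or_det_eq_neg_one hns hp hr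
  have hρdet := hdet.imp And.right And.right
  have hF1 := Ring.neg_one_ne_one_of_char_ne_two (ringChar_ne_two_of_card_eq_sq hF P.odd_left)
  have hE1 := Ring.neg_one_ne_one_of_char_ne_two (ringChar_ne_two_of_card_eq_sq hE P.odd_right)
  have hdet_iff : (ρ h).det = 1 ↔ (φ h).det = 1 := by
    rcases hdet with ⟨hφ, hρ⟩ | ⟨hφ, hρ⟩ <;> simp [hφ, hρ, hF1, hE1]
  obtain ⟨hpow, hpow2⟩ := P.pow_gcd_add_one_eq_one_iff hr hw
  rw [← P.right_pow_eq_one_iff, ← P.left_pow_eq_one_iff, iff_comm] at hpow hpow2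
  rw [(P.isIsometry_left h).sum_card_unitEigenvectors (p := p) P.odd_left hρns hρdet
      (by rwa [hρord]) ((P.left_pow_eq_one_iff _).2 ((P.pow_add_one_eq_one_iff hns hp).2 hr)) hw,
    (P.isIsometry_right h).sum_card_unitEigenvectors (p := p) P.odd_right hns (P.det_right h)
      (by rwa [hφord]) ((P.right_pow_eq_one_iff _).2 hr)
      (hw.of_dvd_nat (Nat.gcd_dvd_right _ _))]
  rw [if_congr hdet_iff (if_congr hpow rfl rfl) (if_congr hpow2 rfl rfl), mul_left_comm]

end UnitaryPair

end UnitaryPairs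

/-! ### Totals over the group -/

section Totals

open scoped Finset

section ScalarMatrices

variable {F : Type*} [Field F] [Fintype F] [DecidableEq F] {σ : F →+* F}

lemma fixedIsotropic_smul_one (x : F) : fixedIsotropic σ (x • 1) = ({y | y * σ y = 1} : Finset F) :=
  Finset.filter_congr fun _ _ ↦ and_iff_left ⟨x, by rw [smul_mulVec, one_mulVec]⟩

lemma unitEigenvectors_smul_one (x z : F) :
    unitEigenvectors σ (x • 1) z = if z = x then ({v | form σ v v = 1} : Finset _) else ∅ := by
  split_ifs with hzx
  · exact Finset.filter_congr fun v _ ↦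
      and_iff_left (by rw [smul_mulVec, one_mulVec, hzx])
  · refine Finset.filter_eq_empty_iff.2 fun v _ ⟨hv, hxz⟩ ↦ hzx ?_
    rw [smul_mulVec, one_mulVec] at hxz
    refine (smul_left_injective F (fun hv0 ↦ ?_) hxz).symm
    simp [hv0, form] at hv

variable {n : ℕ} {hF : Fintype.card F = n ^ 2}

lemma card_fixedIsotropic_smul_one (x : F) : #(fixedIsotropic (conj hF) (x • 1)) = n + 1 := by
  rw [fixedIsotropic_smul_one]
  exact card_filter_mul_conj_eq hF one_ne_zero (map_one _)

lemma sum_card_unitEigenvectors_smul_one (x : F) (w : ℕ) :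
    ∑ z : F with z ^ w = 1, #(unitEigenvectors (conj hF) (x • 1) z) =
      if x ^ w = 1 then (n + 1) * (n * (n - 1)) else 0 := by
  simp_rw [unitEigenvectors_smul_one, apply_ite Finset.card, Finset.card_empty]
  simp [Finset.sum_ite_eq', card_unitSphere]

end ScalarMatrices

lemma sum_add_sum_eq_of_eq_off {ι M : Type*} [Fintype ι] [AddCommMonoid M]
    {f g : ι → M} {s : Finset ι} (hfg : ∀ i ∉ s, f i = g i) :
    ∑ i, f i + ∑ i ∈ s, g i = ∑ i, g i + ∑ i ∈ s, f i := by
  classical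
  rw [← Finset.sum_add_sum_compl s f, ← Finset.sum_add_sum_compl s g,
    Finset.sum_congr rfl fun i hi ↦ hfg i (Finset.mem_compl.1 hi)]
  abel

namespace UnitaryPair

variable {F E H : Type*} [Field F] [Fintype F] [Field E] [Fintype E] [Group H] [Fintype H]
  {q r : ℕ} {hF : Fintype.card F = q ^ 2} {hE : Fintype.card E = r ^ 2}
  {ρ : H →* Matrix (Fin 2) (Fin 2) F} {φ : H →* Matrix (Fin 2) (Fin 2) E}

lemma sum_comp_right [DecidableEq E] (P : UnitaryPair hF hE ρ φ)
    (f : Matrix (Fin 2) (Fin 2) E → ℕ) :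
    ∑ h, f (φ h) = ∑ v with form (conj hE) v v = 1, f (unitaryMat (conj hE) v 1) +
      ∑ v with form (conj hE) v v = 1, f (unitaryMat (conj hE) v (-1)) := by
  have hE1 := Ring.neg_one_ne_one_of_char_ne_two (ringChar_ne_two_of_card_eq_sq hE P.odd_right)
  let S : Finset (E × (Fin 2 → E)) := {1, -1} ×ˢ ({v | form (conj hE) v v = 1} : Finset _)
  have hmem {x : E × (Fin 2 → E)} (hx : x ∈ S) :
      (x.1 = 1 ∨ x.1 = -1) ∧ form (conj hE) x.2 x.2 = 1 := by
    simpa [S] using hx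
  have hinj : Set.InjOn (fun x : E × (Fin 2 → E) ↦ unitaryMat (conj hE) x.2 x.1) S :=
    fun x hx y hy hxy ↦ by
      replace hxy : unitaryMat (conj hE) x.2 x.1 = unitaryMat (conj hE) y.2 y.1 := hxy
      refine Prod.ext ?_ ?_
      · exact (det_unitaryMat (hmem hx).2).symm.trans
          ((congrArg det hxy).trans (det_unitaryMat (hmem hy).2))
      · exact unitaryMat_mulVec_single_zero.symm.trans
          ((congrArg (· *ᵥ _) hxy).trans unitaryMat_mulVec_single_zero)
  have himage : Finset.univ.image φ = S.image fun x ↦ unitaryMat (conj hE) x.2 x.1 := by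
    ext M
    have hrange := P.mem_range_right_iff M
    simp only [Finset.mem_image, Finset.mem_univ, true_and, Set.mem_range] at hrange ⊢
    rw [hrange]
    exact ⟨fun ⟨v, t, ht, hv, hM⟩ ↦ ⟨(t, v), by simp [S, ht, hv], hM⟩,
      fun ⟨x, hx, hM⟩ ↦ ⟨x.2, x.1, (hmem hx).1, (hmem hx).2, hM⟩⟩
  rw [← Finset.sum_image (f := f) P.injective_right.injOn, himage, Finset.sum_image hinj,
    Finset.sum_product, Finset.sum_pair hE1.symm]

theorem card_eq (P : UnitaryPair hF hE ρ φ) :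
    Fintype.card H = 2 * ((r + 1) * (r * (r - 1))) := by
  have : DecidableEq E := Classical.decEq E
  simpa [card_unitSphere, two_mul] using P.sum_comp_right fun _ ↦ 1

/-- The sums can only differ at the two elements which `φ` maps to `1` and `-1`. -/
lemma sum_add_eq_sum_add (P : UnitaryPair hF hE ρ φ)
    {f : Matrix (Fin 2) (Fin 2) F → ℕ} {g : Matrix (Fin 2) (Fin 2) E → ℕ}
    (hfg : ∀ h, ¬ IsScalar (φ h) → f (ρ h) = g (φ h)) :
    ∑ h, f (ρ h) + (g 1 + g (-1)) = ∑ h, g (φ h) + (f 1 + f (-1)) := by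
  classical
  obtain ⟨z, hφz, hρz⟩ := P.exists_map_eq_neg_one
  have hz1 : 1 ≠ z := by
    rintro rfl
    exact Ring.neg_one_ne_one_of_char_ne_two (ringChar_ne_two_of_card_eq_sq hE P.odd_right)
      (by simpa using (congrFun (congrFun (φ.map_one.symm.trans hφz) 0) 0).symm)
  have hoff : ∀ h ∉ ({1, z} : Finset H), f (ρ h) = g (φ h) := fun h hh ↦ hfg h fun hs ↦ by
    rw [Finset.mem_insert, Finset.mem_singleton, not_or] at hh
    rcases P.right_eq_one_or_neg_one hs with h1 | h1
    · exact hh.1 (P.injective_right (h1.trans φ.map_one.symm))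
    · exact hh.2 (P.injective_right (h1.trans hφz.symm))
  simpa [Finset.sum_pair hz1, hφz, hρz] using sum_add_sum_eq_of_eq_off hoff

theorem sum_card_fixedIsotropic [DecidableEq F] (p : ℕ) [CharP F p] [CharP E p]
    (P : UnitaryPair hF hE ρ φ) :
    ∑ h, #(fixedIsotropic (conj hF) (ρ h)) + 2 * (r + 1) =
      2 * ((r + 1) * (r * (r - 1))) + 2 * (q + 1) := by
  have : DecidableEq E := Classical.decEq E
  have hcompare := P.sum_add_eq_sum_add
    (f := fun M ↦ #(fixedIsotropic (conj hF) M)) (g := fun M ↦ #(fixedIsotropic (conj hE) M))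
    fun h hns ↦ P.card_fixedIsotropic_left_eq p hns
  rw [P.sum_comp_right fun M ↦ #(fixedIsotropic (conj hE) M),
    sum_card_fixedIsotropic_unitaryMat P.odd_right (by simp),
    sum_card_fixedIsotropic_unitaryMat P.odd_right (by simp),
    ← one_smul E (1 : Matrix (Fin 2) (Fin 2) E), ← one_smul F (1 : Matrix (Fin 2) (Fin 2) F),
    ← neg_smul, ← neg_smul] at hcompare
  simp only [card_fixedIsotropic_smul_one] at hcompare
  linarith

theorem sum_card_unitEigenvectors_right [DecidableEq E] (P : UnitaryPair hF hE ρ φ) {e : ℕ}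
    (he : e ∣ r + 1) :
    ∑ h, ∑ x : E with x ^ e = 1, #(unitEigenvectors (conj hE) (φ h) x) =
      e * (2 * ((r + 1) * (r * (r - 1)))) := by
  obtain ⟨d, hd⟩ := he
  have hcard : #{x : E | x ^ e = 1} = e := by
    refine card_filter_pow_eq (d := d * (r - 1)) ?_ (one_pow _)
    rw [card_sub_one_of_card_eq_sq hE, hd, mul_assoc]
  rw [Finset.sum_comm, Finset.sum_congr rfl (g := fun _ ↦ 2 * ((r + 1) * (r * (r - 1)))),
    Finset.sum_const, hcard, smul_eq_mul]
  intro x hx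
  have hx1 : x * conj hE x = 1 := by
    rw [mul_conj, hd, pow_mul, (Finset.mem_filter_univ x).1 hx, one_pow]
  rw [P.sum_comp_right fun M ↦ #(unitEigenvectors (conj hE) M x),
    sum_card_unitEigenvectors_unitaryMat (by simp), sum_card_unitEigenvectors_unitaryMat (by simp),
    if_pos hx1, two_mul]

theorem sum_card_unitEigenvectors_left [DecidableEq F] (p : ℕ) [CharP F p] [CharP E p]
    (P : UnitaryPair hF hE ρ φ) {w : ℕ} (hw : Odd w) :
    (r + 1) * ∑ h, ∑ x : F with x ^ w = 1, #(unitEigenvectors (conj hF) (ρ h) x) +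
        (q + 1) * ((r + 1) * (r * (r - 1))) =
      (q + 1) * ((r + 1).gcd w * (2 * ((r + 1) * (r * (r - 1))))) +
        (r + 1) * ((q + 1) * (q * (q - 1))) := by
  have : DecidableEq E := Classical.decEq E
  have hw' : Odd ((r + 1).gcd w) := hw.of_dvd_nat (Nat.gcd_dvd_right _ _)
  have hF1 := Ring.neg_one_ne_one_of_char_ne_two (ringChar_ne_two_of_card_eq_sq hF P.odd_left)
  have hE1 := Ring.neg_one_ne_one_of_char_ne_two (ringChar_ne_two_of_card_eq_sq hE P.odd_right)
  have hcompare := P.sum_add_eq_sum_add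
    (f := fun M ↦ (r + 1) * ∑ x : F with x ^ w = 1, #(unitEigenvectors (conj hF) M x))
    (g := fun M ↦ (q + 1) *
      ∑ x : E with x ^ (r + 1).gcd w = 1, #(unitEigenvectors (conj hE) M x))
    fun h hns ↦ P.sum_card_unitEigenvectors_left_eq p hns hw
  rw [← one_smul E (1 : Matrix (Fin 2) (Fin 2) E), ← one_smul F (1 : Matrix (Fin 2) (Fin 2) F),
    ← neg_smul, ← neg_smul] at hcompare
  simp only [sum_card_unitEigenvectors_smul_one, one_pow, hw.neg_one_pow, hw'.neg_one_pow, hF1, hE1,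
    if_true, if_false, mul_zero, add_zero, ← Finset.mul_sum,
    P.sum_card_unitEigenvectors_right (Nat.gcd_dvd_left _ _)] at hcompare
  exact hcompare

end UnitaryPair

end Totals

/-! ### The action on the Hermitian curve -/

section HermitianCurve

open Projectivization
open scoped Finset

variable {F : Type*} [Field F]

section ExtendByOne

variable {M : Matrix (Fin 2) (Fin 2) F} {v : Fin 2 → F} {z : F} {g : GL (Fin 3) F}

/-- The block diagonal matrix with blocks `M` and `1`. The elements of `MlSet` are of this form. -/
def extendByOne : Matrix (Fin 2) (Fin 2) F →* Matrix (Fin 3) (Fin 3) F where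
  toFun M := !![M 0 0, M 0 1, 0; M 1 0, M 1 1, 0; 0, 0, 1]
  map_one' := by
    ext i j
    fin_cases i <;> fin_cases j <;> rfl
  map_mul' M N := by
    ext i j
    fin_cases i <;> fin_cases j <;> simp [mul_apply, Fin.sum_univ_succ]

lemma extendByOne_apply :
    extendByOne M = !![M 0 0, M 0 1, 0; M 1 0, M 1 1, 0; 0, 0, 1] :=
  rfl

lemma extendByOne_injective : Function.Injective (extendByOne (F := F)) := fun M N h ↦ by
  ext i j
  have hij := congrFun (congrFun h i.castSucc) j.castSucc
  fin_cases i <;> fin_cases j <;> exact hij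

lemma extendByOne_mulVec :
    extendByOne M *ᵥ ![v 0, v 1, z] = ![(M *ᵥ v) 0, (M *ᵥ v) 1, z] := by
  ext i
  fin_cases i <;> simp [extendByOne_apply, mulVec, dotProduct, Fin.sum_univ_succ]

lemma mulVec_ne_zero (g : GL (Fin 3) F) {x : Fin 3 → F} (hx : x ≠ 0) : g.1 *ᵥ x ≠ 0 := fun h ↦
  hx (mulVec_injective_of_isUnit g.isUnit (h.trans (mulVec_zero _).symm))

lemma glAct_mk (g : GL (Fin 3) F) {x : Fin 3 → F} (hx : x ≠ 0) :
    glAct g (mk F x hx) = mk F (g.1 *ᵥ x) (mulVec_ne_zero g hx) :=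
  rfl

lemma glAct_mk_eq_mk_iff (hg : extendByOne M = g) (hv : ![v 0, v 1, z] ≠ 0) :
    glAct g (mk F ![v 0, v 1, z] hv) = mk F ![v 0, v 1, z] hv ↔
      ∃ a : F, M *ᵥ v = a • v ∧ z = a * z := by
  rw [glAct_mk, mk_eq_mk_iff']
  refine exists_congr fun a ↦ ?_
  simp only [← hg, extendByOne_mulVec, funext_iff, Fin.forall_fin_succ]
  simp [eq_comm, and_assoc]

end ExtendByOne

lemma exists_mk_eq (x : Projectivization F (Fin 3 → F)) :
    ∃ (v : Fin 2 → F) (z : F) (h : ![v 0, v 1, z] ≠ 0), mk F ![v 0, v 1, z] h = x := by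
  induction x with | h v hv
  have hv' : ![v 0, v 1, v 2] = v := by
    ext i
    fin_cases i <;> rfl
  exact ⟨![v 0, v 1], v 2, by simpa [hv'] using hv, by simp [hv']⟩

/-- The points `(1 : y : 0)` and `(v₀ : v₁ : 1)` of the plane. All points of the Hermitian curve
are of this form. -/
def chart : F ⊕ (Fin 2 → F) → Projectivization F (Fin 3 → F)
  | Sum.inl y => mk F ![1, y, 0] fun h ↦ by simpa using congrFun h 0
  | Sum.inr v => mk F ![v 0, v 1, 1] fun h ↦ by simpa using congrFun h 2

lemma chart_injective : Function.Injective (chart (F := F)) := by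
  rintro (y | v) (y' | v') h
  all_goals
    obtain ⟨a, ha⟩ := (mk_eq_mk_iff' F _ _ _ _).1 h
    simp only [funext_iff, Fin.forall_fin_succ, Pi.smul_apply, smul_eq_mul, cons_val_zero,
      cons_val_succ, mul_one, mul_zero] at ha
  · grind
  · grind
  · grind
  · obtain ⟨h0, h1, rfl, -⟩ := ha
    refine congrArg _ (funext fun i ↦ ?_)
    fin_cases i
    · simpa using h0.symm
    · simpa using h1.symm

section HermitianPts

variable [Fintype F] {q : ℕ} {hF : Fintype.card F = q ^ 2} {N : Matrix (Fin 2) (Fin 2) F}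
  {v : Fin 2 → F} {z : F} {g : GL (Fin 3) F}

lemma mk_mem_hermitianPts (hF : Fintype.card F = q ^ 2) (hv : ![v 0, v 1, z] ≠ 0) :
    mk F ![v 0, v 1, z] hv ∈ hermitianPts q F ↔ form (conj hF) v v = z * conj hF z := by
  obtain ⟨a, ha⟩ := exists_smul_eq_mk_rep F ![v 0, v 1, z] hv
  have ha0 : (a : F) ^ (q + 1) ≠ 0 := pow_ne_zero _ a.ne_zero
  simp only [hermitianPts, Set.mem_ofPred_eq, ← ha, form, mul_conj, Units.smul_def, Pi.smul_apply,
    smul_eq_mul, mul_pow, ← mul_sub, mul_right_inj' ha0, cons_val_zero, cons_val_one, cons_val]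
  constructor <;> intro h <;> linear_combination -h

lemma exists_isIsometry_of_mem_MlSet (hg : g ∈ MlSet q F) :
    ∃ M, IsIsometry (conj hF) M ∧ extendByOne M = g := by
  obtain ⟨a, c, t, hac, ht, hg⟩ := hg
  refine ⟨unitaryMat (conj hF) ![a, c] t,
    isIsometry_unitaryMat ?_ (by rw [mul_conj, ht]) (conj_involutive hF), ?_⟩
  · simpa [form, mul_conj] using hac
  · rw [hg]
    simp [extendByOne_apply, unitaryMat, conj_apply]

lemma glAct_mem_hermitianPts (hg : g ∈ MlSet q F) {x : Projectivization F (Fin 3 → F)}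
    (hF : Fintype.card F = q ^ 2) (hx : x ∈ hermitianPts q F) : glAct g x ∈ hermitianPts q F := by
  obtain ⟨M, hM, hMg⟩ := exists_isIsometry_of_mem_MlSet (hF := hF) hg
  obtain ⟨v, z, hvz, rfl⟩ := exists_mk_eq x
  rw [mk_mem_hermitianPts hF] at hx
  simp only [glAct_mk, ← hMg, extendByOne_mulVec]
  rw [mk_mem_hermitianPts hF, hM, hx]

lemma exists_chart_eq (hF : Fintype.card F = q ^ 2) {x : Projectivization F (Fin 3 → F)}
    (hx : x ∈ hermitianPts q F) : ∃ s, chart s = x := by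
  obtain ⟨v, z, hvz, rfl⟩ := exists_mk_eq x
  rw [mk_mem_hermitianPts hF] at hx
  by_cases hz : z = 0
  · subst hz
    have hv : v ≠ 0 := by
      rintro rfl
      simp at hvz
    have hv0 := apply_zero_ne_zero_of_form_eq_zero hv (by simpa using hx)
    refine ⟨Sum.inl (v 1 / v 0), (mk_eq_mk_iff' F _ _ _ _).2 ⟨(v 0)⁻¹, ?_⟩⟩
    ext i
    fin_cases i <;> simp [hv0, div_eq_inv_mul]
  · refine ⟨Sum.inr (z⁻¹ • v), (mk_eq_mk_iff' F _ _ _ _).2 ⟨z⁻¹, ?_⟩⟩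
    ext i
    fin_cases i <;> simp [hz]

variable [DecidableEq F] {M : Matrix (Fin 2) (Fin 2) F}

lemma chart_mem_fixed_iff (hg : extendByOne M = g) (s : F ⊕ (Fin 2 → F)) :
    (chart s ∈ hermitianPts q F ∧ glAct g (chart s) = chart s) ↔
      s ∈ (fixedIsotropic (conj hF) M).disjSum (unitEigenvectors (conj hF) M 1) := by
  obtain y | v := s
  · rw [Finset.inl_mem_disjSum, fixedIsotropic, Finset.mem_filter_univ]
    refine and_congr ((mk_mem_hermitianPts hF (v := ![1, y]) _).trans ?_)
      ((glAct_mk_eq_mk_iff hg (v := ![1, y]) _).trans (by simp))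
    rw [form_one_slope, zero_mul, sub_eq_zero, eq_comm]
  · rw [Finset.inr_mem_disjSum, unitEigenvectors, Finset.mem_filter_univ]
    refine and_congr ((mk_mem_hermitianPts hF _).trans (by simp))
      ((glAct_mk_eq_mk_iff hg _).trans (by simp))

theorem ncard_fixed_hermitianPts (hg : extendByOne M = g) :
    {x | x ∈ hermitianPts q F ∧ glAct g x = x}.ncard =
      #(fixedIsotropic (conj hF) M) + #(unitEigenvectors (conj hF) M 1) := by
  have himage : {x | x ∈ hermitianPts q F ∧ glAct g x = x} =
      chart '' ((fixedIsotropic (conj hF) M).disjSum (unitEigenvectors (conj hF) M 1) :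
        Set (F ⊕ (Fin 2 → F))) := by
    ext x
    constructor
    · intro hx
      obtain ⟨s, rfl⟩ := exists_chart_eq hF hx.1
      exact ⟨s, (chart_mem_fixed_iff hg s).1 hx, rfl⟩
    · rintro ⟨s, hs, rfl⟩
      exact (chart_mem_fixed_iff hg s).2 hs
  rw [himage, Set.ncard_image_of_injective _ chart_injective, Set.ncard_coe_finset,
    Finset.card_disjSum]

end HermitianPts

section Scaling

variable [Fintype F] [DecidableEq F] {σ : F →+* F} {M : Matrix (Fin 2) (Fin 2) F} {x : F}

lemma fixedIsotropic_smul (hx : x ≠ 0) : fixedIsotropic σ (x • M) = fixedIsotropic σ M := by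
  refine Finset.filter_congr fun y _ ↦ and_congr_right fun _ ↦ ?_
  simp_rw [smul_mulVec]
  constructor
  · rintro ⟨z, hz⟩
    exact ⟨x⁻¹ * z, by rw [mul_smul, ← hz, inv_smul_smul₀ hx]⟩
  · rintro ⟨z, hz⟩
    exact ⟨x * z, by rw [hz, mul_smul]⟩

lemma unitEigenvectors_smul_one_eq (hx : x ≠ 0) :
    unitEigenvectors σ (x • M) 1 = unitEigenvectors σ M x⁻¹ := by
  refine Finset.filter_congr fun v _ ↦ and_congr_right fun _ ↦ ?_
  rw [smul_mulVec, one_smul, eq_inv_smul_iff₀ hx]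

end Scaling

end HermitianCurve

/-! ### Burnside's lemma for a product with a group of homologies -/

section Burnside

open scoped Finset

lemma sum_ncard_fixedBy_eq {G X : Type*} [Group G] [Fintype G] [MulAction G X] [Finite X]
    (O : SubMulAction G X) :
    ∑ g : G, {x | x ∈ O ∧ g • x = x}.ncard =
      Nat.card (MulAction.orbit G '' (O : Set X)) * Fintype.card G := by
  have horbits : Nat.card (MulAction.orbitRel.Quotient G O) =
      Nat.card (MulAction.orbit G '' (O : Set X)) := by
    have hker : MulAction.orbitRel G O =
        Setoid.ker fun x : O ↦ MulAction.orbit G (x : X) := by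
      ext x y
      rw [Setoid.ker_def, MulAction.orbit_eq_iff]
      exact SubMulAction.mem_orbit_subMul_iff
    rw [MulAction.orbitRel.Quotient, hker, Nat.card_congr (Setoid.quotientKerEquivRange _),
      Set.image_eq_range]
    rfl
  rw [← horbits, ← Nat.card_eq_fintype_card (α := G), ← Nat.card_prod,
    ← Nat.card_congr (MulAction.sigmaFixedByEquivOrbitsProdGroup G O), Nat.card_sigma]
  refine Finset.sum_congr rfl fun g _ ↦ Nat.card_congr ?_
  exact
    { toFun := fun x ↦ ⟨⟨x, x.2.1⟩, Subtype.ext x.2.2⟩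
      invFun := fun x ↦ ⟨x, x.1.2, congrArg Subtype.val x.2⟩ }

variable {F : Type*} [Field F]

theorem numOrbits_range_mul_card [Finite F] {G : Type*} [Group G] [Fintype G]
    (f : G →* GL (Fin 3) F) {O : Set (Projectivization F (Fin 3 → F))}
    (hO : ∀ g, ∀ x ∈ O, glAct (f g) x ∈ O) :
    numOrbits f.range O * Fintype.card G = ∑ g, {x | x ∈ O ∧ glAct (f g) x = x}.ncard := by
  let _ : MulAction G (Projectivization F (Fin 3 → F)) := .compHom _
    ((GeneralLinearGroup.toLin (n := Fin 3) (R := F)).toMonoidHom.comp f)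
  let S : SubMulAction G (Projectivization F (Fin 3 → F)) := ⟨O, fun g _ hx ↦ hO g _ hx⟩
  have horbit : (fun x ↦ {y | ∃ g ∈ f.range, glAct g x = y}) = MulAction.orbit G := by
    ext x y
    simp only [MonoidHom.mem_range, exists_exists_eq_and]
    rfl
  rw [numOrbits, horbit]
  exact (sum_ncard_fixedBy_eq S).symm

/-- The homology `diag(ε, ε, 1)`, as an element of `GL (Fin 3) F`. -/
def homology : Fˣ →* GL (Fin 3) F :=
  (Units.map extendByOne).comp (Units.map (algebraMap F (Matrix (Fin 2) (Fin 2) F)).toMonoidHom)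

lemma homology_injective : Function.Injective (homology (F := F)) :=
  (Units.map_injective extendByOne_injective).comp
    (Units.map_injective (algebraMap F (Matrix (Fin 2) (Fin 2) F)).injective)

lemma coe_homology (ε : Fˣ) : (homology ε).1 = extendByOne ((ε : F) • 1) :=
  congrArg extendByOne (Algebra.algebraMap_eq_smul_one _)

lemma coe_homology_eq_diagonal (ε : Fˣ) : (homology ε).1 = diagonal ![(ε : F), ε, 1] := by
  rw [coe_homology]
  ext i j
  fin_cases i <;> fin_cases j <;> simp [extendByOne_apply]

lemma commute_homology {M : Matrix (Fin 2) (Fin 2) F} {g : GL (Fin 3) F} (hg : extendByOne M = g)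
    (ε : Fˣ) : Commute g (homology ε) :=
  Units.ext <| by
    rw [Units.val_mul, Units.val_mul, coe_homology, ← hg, ← map_mul, ← map_mul, mul_smul_one,
      smul_one_mul]

lemma Z1Set_eq_map_homology {q : ℕ} (hq : (q + 1) / 2 ≠ 0) :
    Z1Set q F = (rootsOfUnity ((q + 1) / 2) F).map homology := by
  ext g
  constructor
  · rintro ⟨ε, hε, hg⟩
    have hε0 : ε ≠ 0 := by
      rintro rfl
      simp [hq] at hε
    exact ⟨Units.mk0 ε hε0, Units.ext (by simpa using hε),
      Units.ext ((coe_homology_eq_diagonal _).trans hg.symm)⟩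
  · rintro ⟨ε, hε, rfl⟩
    exact ⟨ε, by simpa using congrArg Units.val hε, coe_homology_eq_diagonal ε⟩

lemma exists_inter_Z1Set_eq_map_homology {q : ℕ} (hq : (q + 1) / 2 ≠ 0)
    (L : Subgroup (GL (Fin 3) F)) :
    ∃ S : Subgroup Fˣ, (L : Set (GL (Fin 3) F)) ∩ Z1Set q F = S.map homology := by
  refine ⟨L.comap homology ⊓ rootsOfUnity ((q + 1) / 2) F, ?_⟩
  rw [Z1Set_eq_map_homology hq, Subgroup.coe_map, Subgroup.coe_map, Subgroup.coe_inf,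
    Subgroup.coe_comap, Set.image_preimage_inter]

lemma sum_subgroup_units_eq [Fintype F] [DecidableEq F] {M : Type*} [AddCommMonoid M]
    (S : Subgroup Fˣ) [Fintype S] (f : F → M) :
    ∑ x : S, f (x : Fˣ) = ∑ x : F with x ^ Nat.card S = 1, f x := by
  have hinj : Function.Injective fun x : S ↦ ((x : Fˣ) : F) :=
    Units.val_injective.comp Subtype.val_injective
  have himage : Finset.univ.image (fun x : S ↦ ((x : Fˣ) : F)) =
      ({x | x ^ Nat.card S = 1} : Finset F) := by
    refine Finset.eq_of_subset_of_card_le (fun y hy ↦ ?_) (le_of_eq ?_)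
    · obtain ⟨x, -, rfl⟩ := Finset.mem_image.1 hy
      exact Finset.mem_filter_univ _ |>.2 <|
        congrArg (fun x : S ↦ ((x : Fˣ) : F)) (pow_card_eq_one' (x := x))
    · rw [Finset.card_image_of_injective _ hinj, Finset.card_univ, ← Nat.card_eq_fintype_card]
      refine card_filter_pow_eq (d := S.index) ?_ (one_pow _)
      rw [S.card_mul_index, Nat.card_units, Nat.card_eq_fintype_card]
  rw [← himage, Finset.sum_image hinj.injOn]

variable [Fintype F] [DecidableEq F] {q : ℕ}

lemma ncard_fixed_mul_homology {hF : Fintype.card F = q ^ 2} {M : Matrix (Fin 2) (Fin 2) F}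
    {g : GL (Fin 3) F} (hg : extendByOne M = g) (ε : Fˣ) :
    {x | x ∈ hermitianPts q F ∧ glAct (g * homology ε) x = x}.ncard =
      #(fixedIsotropic (conj hF) M) + #(unitEigenvectors (conj hF) M ((ε⁻¹ : Fˣ) : F)) := by
  have hmul : extendByOne ((ε : F) • M) = (g * homology ε : GL (Fin 3) F) := by
    rw [Units.val_mul, coe_homology, ← hg, ← map_mul, mul_smul_one]
  rw [ncard_fixed_hermitianPts (hF := hF) hmul, fixedIsotropic_smul ε.ne_zero,
    unitEigenvectors_smul_one_eq ε.ne_zero, Units.val_inv_eq_inv_val]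

variable {L H : Subgroup (GL (Fin 3) F)} [Fintype H] {ρ : H →* Matrix (Fin 2) (Fin 2) F}
  {S : Subgroup Fˣ}

theorem numOrbits_hermitianPts_mul_card (hF : Fintype.card F = q ^ 2)
    (hL : (L : Set (GL (Fin 3) F)) ⊆ MlSet q F) (hρ : ∀ h, extendByOne (ρ h) = (h : GL (Fin 3) F))
    (hLS : L = H ⊔ S.map homology) :
    numOrbits L (hermitianPts q F) * (Nat.card S * Fintype.card H) =
      Nat.card S * ∑ h, #(fixedIsotropic (conj hF) (ρ h)) +
        ∑ h, ∑ x : F with x ^ Nat.card S = 1, #(unitEigenvectors (conj hF) (ρ h) x) := by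
  classical
  let f : H × S →* GL (Fin 3) F := H.subtype.noncommCoprod (homology.comp S.subtype)
    fun h ε ↦ commute_homology (hρ h) ε
  have hf : L = f.range := by
    rw [hLS, MonoidHom.noncommCoprod_range _ _ fun h ε ↦ commute_homology (hρ h) ε.1,
      H.range_subtype, MonoidHom.range_comp, S.range_subtype]
  have hfixed (x : H × S) : {y | y ∈ hermitianPts q F ∧ glAct (f x) y = y}.ncard =
      #(fixedIsotropic (conj hF) (ρ x.1)) +
        #(unitEigenvectors (conj hF) (ρ x.1) ((x.2⁻¹ : S) : Fˣ)) :=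
    ncard_fixed_mul_homology (hρ x.1) x.2
  have hinv (h : H) : ∑ ε : S, #(unitEigenvectors (conj hF) (ρ h) ((ε⁻¹ : S) : Fˣ)) =
      ∑ x : F with x ^ Nat.card S = 1, #(unitEigenvectors (conj hF) (ρ h) x) := by
    rw [← sum_subgroup_units_eq S fun x ↦ #(unitEigenvectors (conj hF) (ρ h) x)]
    exact Equiv.sum_comp (Equiv.inv S)
      fun ε ↦ #(unitEigenvectors (conj hF) (ρ h) ((ε : Fˣ) : F))
  have hburnside := numOrbits_range_mul_card f (O := hermitianPts q F) fun g x hx ↦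
    glAct_mem_hermitianPts (hL (hf ▸ ⟨g, rfl⟩)) hF hx
  rw [← hf, Fintype.card_prod] at hburnside
  simp only [hfixed, Fintype.sum_prod_type, Finset.sum_add_distrib, hinv, Finset.sum_const,
    Finset.card_univ, smul_eq_mul, ← Finset.mul_sum, ← Nat.card_eq_fintype_card (α := S)]
    at hburnside
  rw [← hburnside, mul_comm (Nat.card S) (Fintype.card H)]

end Burnside

/-! ### The number of orbits -/

section OrbitCount

open scoped Finset

lemma mod_four_eq_one_of_odd_pow {r m : ℕ} (hm : Odd m) (h : r ^ m % 4 = 1) : r % 4 = 1 := by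
  have hr : Odd r := (Nat.odd_pow_iff hm.pos.ne').1 (Nat.odd_iff.2 (by omega))
  obtain ⟨n, rfl⟩ := hm
  have hsq : r ^ 2 % 4 = 1 := by exact_mod_cast Int.sq_mod_four_eq_one_of_odd (hr.natCast (R := ℤ))
  simpa [pow_succ, pow_mul, Nat.mul_mod, Nat.pow_mod, hsq] using h

lemma exists_monoidHom_coe_eq {G M : Type*} [Group G] [Monoid M] {f : G → M}
    (hmul : ∀ x y, f (x * y) = f x * f y) (hone : 1 ∈ Set.range f) : ∃ φ : G →* M, ⇑φ = f := by
  obtain ⟨x, hx⟩ := hone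
  refine ⟨⟨⟨f, ?_⟩, hmul⟩, rfl⟩
  rw [← one_mul (f 1), ← hx, ← hmul, mul_one]

lemma exists_unitaryMat_eq_iff {E : Type*} [Field E] [Fintype E] {r : ℕ}
    (hE : Fintype.card E = r ^ 2) {M : Matrix (Fin 2) (Fin 2) E} :
    (∃ v t, (t = 1 ∨ t = -1) ∧ form (conj hE) v v = 1 ∧ unitaryMat (conj hE) v t = M) ↔
      ∃ a c t : E, (t = 1 ∨ t = -1) ∧ a ^ (r + 1) - c ^ (r + 1) = 1 ∧
        M = !![a, t * c ^ r; c, t * a ^ r] := by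
  have hform (v : Fin 2 → E) : form (conj hE) v v = v 0 ^ (r + 1) - v 1 ^ (r + 1) := by
    rw [form, mul_conj, mul_conj]
  constructor
  · rintro ⟨v, t, ht, hv, rfl⟩
    exact ⟨v 0, v 1, t, ht, (hform v).symm.trans hv, rfl⟩
  · rintro ⟨a, c, t, ht, hac, rfl⟩
    exact ⟨![a, c], t, ht, (hform _).trans hac, rfl⟩

variable {F E : Type*} [Field F] [Fintype F] [Field E] [Fintype E] {q r : ℕ}
  {L H : Subgroup (GL (Fin 3) F)}

lemma exists_isIsometry_monoidHom (hF : Fintype.card F = q ^ 2)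
    (hH : (H : Set (GL (Fin 3) F)) ⊆ MlSet q F) :
    ∃ ρ : H →* Matrix (Fin 2) (Fin 2) F, (∀ h, IsIsometry (conj hF) (ρ h)) ∧
      ∀ h, extendByOne (ρ h) = (h : GL (Fin 3) F) := by
  choose ρ hρ hext using fun h : H ↦ exists_isIsometry_of_mem_MlSet (hF := hF) (hH h.2)
  refine ⟨⟨⟨ρ, extendByOne_injective ?_⟩, fun x y ↦ extendByOne_injective ?_⟩, hρ, hext⟩
  · rw [hext, map_one, H.coe_one, Units.val_one]
  · rw [hext, map_mul, hext, hext, H.coe_mul, Units.val_mul]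

theorem exists_unitaryPair (hF : Fintype.card F = q ^ 2) (hE : Fintype.card E = r ^ 2)
    (hr : r % 4 = 1) (hqr : ∃ m, Odd m ∧ q = r ^ m) (hH : (H : Set (GL (Fin 3) F)) ⊆ MlSet q F)
    {f : H → Matrix (Fin 2) (Fin 2) E} (hinj : Function.Injective f)
    (hmul : ∀ x y, f (x * y) = f x * f y)
    (hrange : Set.range f = {N | ∃ a c t : E, (t = 1 ∨ t = -1) ∧
      a ^ (r + 1) - c ^ (r + 1) = 1 ∧ N = !![a, t * c ^ r; c, t * a ^ r]}) :
    ∃ ρ φ, UnitaryPair (H := H) hF hE ρ φ ∧ ∀ h, extendByOne (ρ h) = (h : GL (Fin 3) F) := by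
  have hone : 1 ∈ Set.range f := by
    rw [hrange]
    exact ⟨1, 0, 1, Or.inl rfl, by simp, by
      simp [Matrix.one_fin_two, zero_pow (one_lt_of_card_eq_sq hE).ne_bot]⟩
  obtain ⟨φ, rfl⟩ := exists_monoidHom_coe_eq hmul hone
  obtain ⟨ρ, hρ, hext⟩ := exists_isIsometry_monoidHom hF hH
  have hρinj : Function.Injective ρ := fun x y hxy ↦
    Subtype.ext <| Units.ext <| by rw [← hext, ← hext, hxy]
  exact ⟨ρ, φ, ⟨hr, hqr, hρinj, hinj, hρ, fun M ↦ by
    rw [exists_unitaryMat_eq_iff, hrange, Set.mem_ofPred_eq]⟩, hext⟩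

theorem UnitaryPair.cast_numOrbits_eq {hF : Fintype.card F = q ^ 2} {hE : Fintype.card E = r ^ 2}
    (p : ℕ) [CharP F p] [CharP E p] {ρ : H →* Matrix (Fin 2) (Fin 2) F}
    {φ : H →* Matrix (Fin 2) (Fin 2) E} (P : UnitaryPair hF hE ρ φ)
    (hρ : ∀ h, extendByOne (ρ h) = (h : GL (Fin 3) F)) {S : Subgroup Fˣ}
    (hS : Odd (Nat.card S)) (hL : (L : Set (GL (Fin 3) F)) ⊆ MlSet q F)
    (hLS : L = H ⊔ S.map homology) :
    (numOrbits L (hermitianPts q F) : ℚ) =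
      1 + ((q : ℚ) - r) / (r * (r - 1) * (r + 1)) +
        (q + 1) * Nat.gcd (r + 1) (Nat.card S) / ((r + 1) * Nat.card S) +
        (q ^ 2 - q - r * (r - 1)) * (q + 1) / (2 * r * (r ^ 2 - 1) * Nat.card S) := by
  classical
  have : Fintype H := Fintype.ofFinite H
  have hburnside := numOrbits_hermitianPts_mul_card hF hL hρ hLS
  have hisotropic := P.sum_card_fixedIsotropic p
  have hunit := P.sum_card_unitEigenvectors_left p hS
  have hq := one_lt_of_card_eq_sq hF
  have hr := one_lt_of_card_eq_sq hE
  have hr0 : (r : ℚ) ≠ 0 := by positivity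
  have hr1 : (r : ℚ) - 1 ≠ 0 := sub_ne_zero.2 (by exact_mod_cast hr.ne')
  have hr2 : (r : ℚ) + 1 ≠ 0 := by positivity
  have hS0 : (Nat.card S : ℚ) ≠ 0 := by exact_mod_cast hS.pos.ne'
  rw [P.card_eq] at hburnside
  qify [hq.le, hr.le] at hburnside hisotropic hunit
  rw [show (r : ℚ) ^ 2 - 1 = (r + 1) * (r - 1) by ring]
  field_simp
  refine mul_left_cancel₀ hr2 ?_
  linear_combination (r + 1) * hburnside + Nat.card S * (r + 1) * hisotropic + hunit

end OrbitCount

theorem stmt16 (p h q k w : ℕ) [hp : Fact (Nat.Prime p)] (hpodd : Odd p)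
    (hh : 1 ≤ h) (hq : q = p ^ h) (hq4 : q % 4 = 1)
    (F : Type*) [Field F] [Fintype F] (hF : Fintype.card F = q ^ 2)
    (hk : k ∣ h) (hodd : Odd (h / k)) (hw : w ∣ (q + 1) / 2)
    (L : Subgroup (GL (Fin 3) F)) (hLMl : (L : Set (GL (Fin 3) F)) ⊆ MlSet q F)
    (hZ1card : Nat.card ((L : Set (GL (Fin 3) F)) ∩ Z1Set q F : Set (GL (Fin 3) F)) = w)
    (H : Subgroup (GL (Fin 3) F))
    (hHiso : ∃ φ : ↥H → Matrix (Fin 2) (Fin 2) (GaloisField p (2 * k)),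
      Function.Injective φ ∧ (∀ x y : ↥H, φ (x * y) = φ x * φ y) ∧
      Set.range φ = {N : Matrix (Fin 2) (Fin 2) (GaloisField p (2 * k)) |
        ∃ a c t : GaloisField p (2 * k), (t = 1 ∨ t = -1) ∧
          a ^ (p ^ k + 1) - c ^ (p ^ k + 1) = 1 ∧
          N = !![a, t * c ^ (p ^ k); c, t * a ^ (p ^ k)]})
    (hgen : L = Subgroup.closure
      ((H : Set (GL (Fin 3) F)) ∪ ((L : Set (GL (Fin 3) F)) ∩ Z1Set q F)))
    (htriv : (H : Set (GL (Fin 3) F)) ∩ ((L : Set (GL (Fin 3) F)) ∩ Z1Set q F) ⊆ {1}) :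
    (numOrbits L (hermitianPts q F) : ℚ)
      = 1 + ((q : ℚ) - (p : ℚ) ^ k)
          / ((p : ℚ) ^ k * ((p : ℚ) ^ k - 1) * ((p : ℚ) ^ k + 1))
        + ((q : ℚ) + 1) * (Nat.gcd (p ^ k + 1) w : ℚ) / (((p : ℚ) ^ k + 1) * (w : ℚ))
        + ((q : ℚ) ^ 2 - (q : ℚ) - (p : ℚ) ^ k * ((p : ℚ) ^ k - 1)) * ((q : ℚ) + 1)
          / (2 * (p : ℚ) ^ k * ((p : ℚ) ^ (2 * k) - 1) * (w : ℚ)) := by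
  obtain ⟨f, hinj, hmul, hrange⟩ := hHiso
  have hqr : q = (p ^ k) ^ (h / k) := by rw [hq, ← pow_mul, Nat.mul_div_cancel' hk]
  have hr4 : p ^ k % 4 = 1 := mod_four_eq_one_of_odd_pow hodd (hqr ▸ hq4)
  have hk0 : k ≠ 0 := by rintro rfl; simp at hodd
  have : CharP F p := charP_of_card_eq_prime_pow (hF.trans (by rw [hq, ← pow_mul]))
  have := Fintype.ofFinite (GaloisField p (2 * k))
  have hE : Fintype.card (GaloisField p (2 * k)) = (p ^ k) ^ 2 := by
    rw [← Nat.card_eq_fintype_card, GaloisField.card p (2 * k) (by omega), ← pow_mul, mul_comm]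
  obtain ⟨S, hS⟩ := exists_inter_Z1Set_eq_map_homology (q := q) (by omega) L
  have hLS : L = H ⊔ S.map homology := by
    rw [hgen, hS, Subgroup.closure_union, Subgroup.closure_eq, Subgroup.closure_eq]
  have hScard : Nat.card S = w := by
    rw [← hZ1card, hS]
    exact (Subgroup.card_map_of_injective homology_injective).symm
  have hwodd : Odd w := Odd.of_dvd_nat (Nat.odd_iff.2 (by omega)) hw
  have hHL : (H : Set (GL (Fin 3) F)) ⊆ MlSet q F :=
    (SetLike.coe_subset_coe.2 (hLS ▸ le_sup_left)).trans hLMl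
  obtain ⟨ρ, φ, P, hρ⟩ := exists_unitaryPair hF hE hr4 ⟨_, hodd, hqr⟩ hHL hinj hmul hrange
  have hcount := P.cast_numOrbits_eq p hρ (hScard ▸ hwodd) hLMl hLS
  rw [hScard] at hcount
  push_cast at hcount
  rw [hcount, mul_comm 2 k, pow_mul]
end

section
/- Let σ ∈ M_ℓ be a nontrivial element that fixes (in the projective action) some point R ∈ O not lying on the line Z = 0 (i.e. R has a representative with nonzero third coordinate). Then σ is a homology of type (A): the order of σ divides q+1, and there exist a line ℓ' in ℙ²(F) and a point P' ∈ ℙ²(F) with P' ∉ ℓ' such that σ fixes every point of ℓ' and fixes P'. -/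
/-!
The last row of `σ` is `(0, 0, 1)`, so `σ` fixes not only the point `R = (x : y : z)` but the vector
`r = (x, y, z)` itself, as well as `e₃ = (0, 0, 1)`. Since `σ` preserves the Hermitian form, it also
fixes the pole of the line joining `R` and `(0 : 0 : 1)`: the vector `w = (y^q, x^q, 0)` is an
eigenvector, with eigenvalue `τ = det σ`. The pole lies off that line because
`x^(q+1) - y^(q+1) = z^(q+1) ≠ 0`, so `σ` is `diag(τ, 1, 1)` in the basis `w, r, e₃`: it is a
homology with axis the line through `r` and `e₃`, and its order is that of `τ`.
-/

open Matrix

theorem orderOf_eq_of_eqOn_of_smul {R M : Type*} [CommRing R] [IsDomain R] [AddCommGroup M]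
    [Module R M] [Module.IsTorsionFree R M] {f : Module.End R M} {W : Submodule R M} {w : M} {τ : R}
    (hw : w ≠ 0) (hcodisjoint : Codisjoint W (R ∙ w)) (hfW : Set.EqOn f id W)
    (hfw : f w = τ • w) : orderOf f = orderOf τ := by
  refine orderOf_eq_orderOf_iff.2 fun n => ?_
  have hpow : (f ^ n) w = τ ^ n • w :=
    (Module.End.hasEigenvector_iff.2 ⟨Module.End.mem_eigenspace_iff.2 hfw, hw⟩).pow_apply n
  constructor
  · intro hf
    refine smul_left_injective R hw ?_
    simpa only [hf, Module.End.one_apply, one_smul] using hpow.symm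
  · intro hτ
    refine LinearMap.ext_on_codisjoint hcodisjoint (fun v hv => ?_) (LinearMap.eqOn_span' ?_)
    · rw [Module.End.pow_apply]
      exact Function.IsFixedPt.iterate (hfW hv) n
    · rintro _ rfl
      rw [hpow, hτ, one_smul, Module.End.one_apply]

theorem exists_involutive_ringHom_eq_pow {F : Type*} [Field F] [Fintype F] {q : ℕ}
    (hF : Fintype.card F = q ^ 2) :
    ∃ φ : F →+* F, Function.Involutive φ ∧ ∀ t, φ t = t ^ q := by
  obtain ⟨p, _, n, hp, hcard⟩ := FiniteField.card' F
  have : Fact p.Prime := ⟨hp⟩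
  obtain ⟨m, -, rfl⟩ : ∃ m ≤ (n : ℕ), q = p ^ m :=
    (Nat.dvd_prime_pow hp).1 (hcard ▸ hF ▸ dvd_pow_self q two_ne_zero)
  refine ⟨iterateFrobenius F p m, fun t => ?_, fun t => iterateFrobenius_def p m t⟩
  rw [iterateFrobenius_def, iterateFrobenius_def, ← pow_mul, ← sq, ← hF, FiniteField.pow_card]

section Projective

variable {F : Type*} [Field F] {σ : GL (Fin 3) F}

theorem glAct_mk_s18 {v : Fin 3 → F} (hv : v ≠ 0) (hσv : σ.val *ᵥ v ≠ 0) :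
    glAct σ (Projectivization.mk F v hv) = Projectivization.mk F (σ.val *ᵥ v) hσv :=
  rfl

theorem glAct_mk_eq_self_iff {v : Fin 3 → F} (hv : v ≠ 0) :
    glAct σ (Projectivization.mk F v hv) = Projectivization.mk F v hv ↔
      ∃ k : F, σ.val *ᵥ v = k • v := by
  have hσv : σ.val *ᵥ v ≠ 0 := fun h =>
    hv (Matrix.mulVec_injective_of_isUnit σ.isUnit (h.trans (Matrix.mulVec_zero _).symm))
  rw [glAct_mk_s18 hv hσv, Projectivization.mk_eq_mk_iff']
  simp only [eq_comm]

theorem glAct_eq_self_iff {x : Projectivization F (Fin 3 → F)} :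
    glAct σ x = x ↔ ∃ k : F, σ.val *ᵥ x.rep = k • x.rep := by
  simpa only [x.mk_rep] using glAct_mk_eq_self_iff (σ := σ) x.rep_nonzero

/-- A collineation of the projective plane is a homology if it fixes every point of some line
`W`, its axis, and some point `P` off that line, its centre. The identity is included. -/
def IsHomology (σ : GL (Fin 3) F) : Prop :=
  ∃ (W : Submodule F (Fin 3 → F)) (P : Projectivization F (Fin 3 → F)),
    Module.finrank F W = 2 ∧ P.rep ∉ W ∧
    (∀ x : Projectivization F (Fin 3 → F), x.rep ∈ W → glAct σ x = x) ∧
    glAct σ P = P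

variable {W : Submodule F (Fin 3 → F)} {w : Fin 3 → F} {τ : F}

theorem isHomology_of_mulVec_eq (hW : Module.finrank F W = 2) (hw : w ∉ W)
    (hσW : ∀ v ∈ W, σ.val *ᵥ v = v) (hσw : σ.val *ᵥ w = τ • w) : IsHomology σ := by
  have hw0 : w ≠ 0 := (ne_of_mem_of_not_mem W.zero_mem hw).symm
  refine ⟨W, Projectivization.mk F w hw0, hW, ?_, fun x hx => ?_, ?_⟩
  · obtain ⟨b, hb⟩ := Projectivization.exists_smul_eq_mk_rep F w hw0
    rwa [← hb, Units.smul_def, Submodule.smul_mem_iff W b.ne_zero]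
  · exact glAct_eq_self_iff.2 ⟨1, by rw [hσW _ hx, one_smul]⟩
  · exact (glAct_mk_eq_self_iff hw0).2 ⟨τ, hσw⟩

theorem orderOf_eq_of_mulVec_eq (hW : Module.finrank F W = 2) (hw : w ∉ W)
    (hσW : ∀ v ∈ W, σ.val *ᵥ v = v) (hσw : σ.val *ᵥ w = τ • w) : orderOf σ = orderOf τ := by
  have hw0 : w ≠ 0 := (ne_of_mem_of_not_mem W.zero_mem hw).symm
  have hcodisjoint : Codisjoint W (F ∙ w) := by
    rw [codisjoint_iff, Submodule.eq_top_iff_finrank_eq, Submodule.finrank_sup_span_singleton hw,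
      hW, Module.finrank_fin_fun]
  calc orderOf σ = orderOf (Matrix.toLinAlgEquiv' σ.val) := by
        rw [← orderOf_units]
        exact (MulEquiv.orderOf_eq (Matrix.toLinAlgEquiv' (R := F)).toMulEquiv σ.val).symm
    _ = orderOf τ := orderOf_eq_of_eqOn_of_smul hw0 hcodisjoint hσW hσw

end Projective

section mlMatrix

variable {R : Type*} [CommRing R] {φ : R →+* R} {a c τ : R} {v : Fin 3 → R}

/-- The matrix `[a, c, τ]` of the group `M_ℓ`, with the `q`-th power map replaced by an arbitrary
ring endomorphism `φ`. -/
def mlMatrix (φ : R →+* R) (a c τ : R) : Matrix (Fin 3) (Fin 3) R :=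
  !![a, τ * φ c, 0; c, τ * φ a, 0; 0, 0, 1]

/-- The pole, for the Hermitian form `X φ(X) - Y φ(Y) - Z φ(Z)`, of the line joining `v` to
`(0 : 0 : 1)`: it spans the vectors orthogonal to both. -/
def pole (φ : R →+* R) (v : Fin 3 → R) : Fin 3 → R :=
  ![φ (v 1), φ (v 0), 0]

theorem mlMatrix_mulVec :
    mlMatrix φ a c τ *ᵥ v = ![a * v 0 + τ * φ c * v 1, c * v 0 + τ * φ a * v 1, v 2] := by
  ext i
  fin_cases i <;> simp [mlMatrix, Matrix.mulVec, dotProduct, Fin.sum_univ_three]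

theorem mlMatrix_mulVec_eq_self [IsDomain R] {k : R} (hv2 : v 2 ≠ 0)
    (hv : mlMatrix φ a c τ *ᵥ v = k • v) : mlMatrix φ a c τ *ᵥ v = v := by
  have hk : v 2 = k * v 2 := by simpa [mlMatrix_mulVec] using congrFun hv 2
  rw [hv, (mul_eq_right₀ hv2).1 hk.symm, one_smul]

/- Applying `φ` to the equations saying that `v` is fixed yields the eigenvector equations of its
pole. -/
theorem mlMatrix_mulVec_pole (hφ : Function.Involutive φ) (hτ : τ * φ τ = 1)
    (hv : mlMatrix φ a c τ *ᵥ v = v) : mlMatrix φ a c τ *ᵥ pole φ v = τ • pole φ v := by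
  rw [mlMatrix_mulVec] at hv
  have hφ0 : φ a * φ (v 0) + φ τ * c * φ (v 1) = φ (v 0) := by
    simpa [hφ c] using congrArg φ (congrFun hv 0)
  have hφ1 : φ c * φ (v 0) + φ τ * a * φ (v 1) = φ (v 1) := by
    simpa [hφ a] using congrArg φ (congrFun hv 1)
  have h0 : a * φ (v 1) + τ * φ c * φ (v 0) = τ * φ (v 1) := by
    linear_combination τ * hφ1 - a * φ (v 1) * hτ
  have h1 : c * φ (v 1) + τ * φ a * φ (v 0) = τ * φ (v 0) := by
    linear_combination τ * hφ0 - c * φ (v 1) * hτ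
  simp [mlMatrix_mulVec, pole, h0, h1]

end mlMatrix

theorem linearIndependent_pole {F : Type*} [Field F] {φ : F →+* F} {v : Fin 3 → F}
    (hv : v 0 * φ (v 0) ≠ v 1 * φ (v 1)) :
    LinearIndependent F ![pole φ v, v, ![0, 0, 1]] := by
  have hdet : (Matrix.of ![pole φ v, v, ![0, 0, 1]]).det =
      v 1 * φ (v 1) - v 0 * φ (v 0) := by
    simp [Matrix.det_fin_three, pole, mul_comm]
  refine Matrix.linearIndependent_rows_of_det_ne_zero (A := Matrix.of ![pole φ v, v, ![0, 0, 1]]) ?_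
  rw [hdet]
  exact sub_ne_zero.2 hv.symm

theorem stmt18_general {F : Type*} [Field F] {φ : F →+* F} (hφ : Function.Involutive φ)
    {a c τ : F} (hτ : τ * φ τ = 1) {σ : GL (Fin 3) F} (hσ : σ.val = mlMatrix φ a c τ)
    {R : Projectivization F (Fin 3 → F)} (hR : R.rep 0 * φ (R.rep 0) ≠ R.rep 1 * φ (R.rep 1))
    (hR3 : R.rep 2 ≠ 0) (hfix : glAct σ R = R) :
    orderOf σ = orderOf τ ∧ IsHomology σ := by
  obtain ⟨k, hk⟩ := glAct_eq_self_iff.1 hfix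
  have hσR : σ.val *ᵥ R.rep = R.rep := by
    rw [hσ] at hk ⊢
    exact mlMatrix_mulVec_eq_self hR3 hk
  have hσw : σ.val *ᵥ pole φ R.rep = τ • pole φ R.rep := by
    rw [hσ] at hσR ⊢
    exact mlMatrix_mulVec_pole hφ hτ hσR
  have hσe₃ : σ.val *ᵥ ![0, 0, 1] = ![0, 0, 1] := by
    rw [hσ, mlMatrix_mulVec]
    simp
  obtain ⟨hindep, hw⟩ := linearIndependent_finCons.1 (linearIndependent_pole hR)
  have hW : Module.finrank F (Submodule.span F (Set.range ![R.rep, ![0, 0, 1]])) = 2 := by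
    simpa using finrank_span_eq_card hindep
  have hσW : ∀ v ∈ Submodule.span F (Set.range ![R.rep, ![0, 0, 1]]), σ.val *ᵥ v = v :=
    LinearMap.eqOn_span (f := Matrix.mulVecLin σ.val) (g := LinearMap.id)
      (Set.forall_mem_range.2 (Fin.forall_fin_two.2 ⟨hσR, hσe₃⟩))
  exact ⟨orderOf_eq_of_mulVec_eq hW hw hσW hσw, isHomology_of_mulVec_eq hW hw hσW hσw⟩

theorem pow_succ_ne_of_mem_hermitianPts {F : Type*} [Field F] {q : ℕ}
    {R : Projectivization F (Fin 3 → F)} (hR : R ∈ hermitianPts q F) (hR3 : R.rep 2 ≠ 0) :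
    R.rep 0 ^ (q + 1) ≠ R.rep 1 ^ (q + 1) := by
  intro h
  have hz : R.rep 2 ^ (q + 1) = 0 := by linear_combination h + hR.out
  exact hR3 (eq_zero_of_pow_eq_zero hz)

theorem stmt18 (p h q : ℕ) (hp : p.Prime) (hh : 1 ≤ h) (hq : q = p ^ h)
    (F : Type*) [Field F] [Fintype F] (hF : Fintype.card F = q ^ 2)
    (σ : GL (Fin 3) F) (hσMl : σ ∈ MlSet q F) (hσne : σ ≠ 1)
    (R : Projectivization F (Fin 3 → F)) (hR : R ∈ hermitianPts q F)
    (hR3 : R.rep 2 ≠ 0) (hfix : glAct σ R = R) :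
    orderOf σ ∣ q + 1 ∧
    ∃ (W : Submodule F (Fin 3 → F)) (P' : Projectivization F (Fin 3 → F)),
      Module.finrank F W = 2 ∧ P'.rep ∉ W ∧
      (∀ x : Projectivization F (Fin 3 → F), x.rep ∈ W → glAct σ x = x) ∧
      glAct σ P' = P' := by
  obtain ⟨φ, hφ, hφq⟩ := exists_involutive_ringHom_eq_pow hF
  obtain ⟨a, c, τ, -, hτ, hσ⟩ := hσMl
  have hRne := pow_succ_ne_of_mem_hermitianPts hR hR3
  simp only [pow_succ', ← hφq] at hτ hσ hRne
  obtain ⟨horder, hhomology⟩ := stmt18_general hφ hτ hσ hRne hR3 hfix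
  exact ⟨horder ▸ orderOf_dvd_of_pow_eq_one (by rwa [pow_succ', ← hφq]), hhomology⟩
end
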